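/- The number of tuples of transpositions (τ₁,...,τ_{m+k-2}) in S_m such that τ_{m+k-2}···τ₁ equals a fixed permutation with cycle type (m₁,...,m_k) (a partition of m into k parts) and the group generated by the τ_i together with the fixed permutation acts transitively on {1,...,m}, divided by the number of relabelings, gives the Hurwitz number m^{k-3}·(m+k-2)!·m₁^{m₁}···m_k^{m_k}/(m₁!···m_k!·s(m₁,...,m_k)), where s(m₁,...,m_k) is the number of symmetries of the multiset {m₁,...,m_k}, valid for m ≥ 3. -/

import Mathlib

open scoped BigOperators

namespace Hurw
open Finset

/-- `c n = n^n / n!`. -/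
noncomputable def cc (n : ℕ) : ℚ := (n : ℚ) ^ n / (n.factorial : ℚ)

lemma cc_zero : cc 0 = 1 := by simp [cc]

lemma cc_pos (n : ℕ) : 0 < cc n := by
  rcases Nat.eq_zero_or_pos n with rfl | h
  · simp [cc]
  · unfold cc; positivity

lemma fwd_zero (q : ℕ) (g : ℚ → ℚ) :
    ∑ i ∈ range (q + 1), (-1 : ℚ) ^ (q - i) * (q.choose i : ℚ) * g i
      = ((fwdDiff (1 : ℚ))^[q] g) 0 := by
  rw [fwdDiff_iter_eq_sum_shift]
  apply sum_congr rfl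
  intro i _
  simp [zsmul_eq_mul]

lemma alt_pow (q e : ℕ) (h : e < q) :
    ∑ i ∈ range (q + 1), (-1 : ℚ) ^ (q - i) * (q.choose i : ℚ) * (i : ℚ) ^ e = 0 := by
  have h1 := fwd_zero q (fun x => x ^ e)
  have h2 := fwdDiff_iter_pow_eq_zero_of_lt (R := ℚ) h
  rw [h1, h2]; rfl

lemma fwd_inv (q : ℕ) : ∀ y : ℚ, 0 < y →
    ((fwdDiff (1 : ℚ))^[q] (fun x => 1 / x)) y
      = (-1) ^ q * (q.factorial : ℚ) / ∏ j ∈ range (q + 1), (y + j) := by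
  induction q with
  | zero => intro y hy; simp
  | succ q ih =>
    intro y hy
    rw [Function.iterate_succ_apply', fwdDiff, ih y hy, ih (y + 1) (by linarith)]
    have h1 : ∏ j ∈ range (q + 1 + 1), (y + (j : ℚ)) =
        y * ∏ j ∈ range (q + 1), (y + 1 + (j : ℚ)) := by
      rw [prod_range_succ', mul_comm]
      simp only [Nat.cast_zero, add_zero]
      congr 1
      apply prod_congr rfl
      intro j _; push_cast; ring
    have h2 : ∏ j ∈ range (q + 1 + 1), (y + (j : ℚ)) =
        (∏ j ∈ range (q + 1), (y + (j : ℚ))) * (y + (q + 1)) := by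
      rw [prod_range_succ]; push_cast; ring
    have p1 : 0 < ∏ j ∈ range (q + 1), (y + 1 + (j : ℚ)) := prod_pos (fun j _ => by positivity)
    have p2 : 0 < ∏ j ∈ range (q + 1), (y + (j : ℚ)) := prod_pos (fun j _ => by positivity)
    rw [h2]
    rw [h1] at h2
    set A := ∏ j ∈ range (q + 1), (y + 1 + (j : ℚ))
    set B := ∏ j ∈ range (q + 1), (y + (j : ℚ))
    have hA : A = B * (y + (q + 1)) / y := by field_simp; linarith
    have hq : 0 < y + ((q : ℚ) + 1) := by positivity
    rw [hA, Nat.factorial_succ, pow_succ]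
    push_cast
    field_simp
    ring

lemma alt_inv (q l : ℕ) (hl : 1 ≤ l) : ∀ e : ℕ, e ≤ q →
    ∑ i ∈ range (q + 1), (-1 : ℚ) ^ (q - i) * (q.choose i : ℚ) * ((i : ℚ) ^ e / ((i : ℚ) + l))
     = (-(l : ℚ)) ^ e * ((-1) ^ q * (q.factorial : ℚ) / ∏ j ∈ range (q + 1), ((l : ℚ) + j)) := by
  have hl' : (0 : ℚ) < l := by exact_mod_cast hl
  intro e
  induction e with
  | zero =>
    intro _
    rw [← fwd_inv q l hl', fwdDiff_iter_eq_sum_shift]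
    simp only [pow_zero, one_mul]
    apply sum_congr rfl
    intro i _
    simp [zsmul_eq_mul, add_comm]
  | succ e ih =>
    intro he
    have h0 := alt_pow q e (by omega)
    have h1 := ih (by omega)
    rw [pow_succ', mul_assoc, ← h1]
    rw [← sub_eq_zero, ← h0, mul_sum, ← sum_sub_distrib]
    apply sum_congr rfl
    intro i _
    have : (0 : ℚ) < (i : ℚ) + l := by positivity
    field_simp
    ring

lemma prod_asc (q l : ℕ) (hl : 1 ≤ l) :
    ∏ j ∈ range (q + 1), ((l : ℚ) + j) = ((l + q).factorial : ℚ) / ((l - 1).factorial : ℚ) := by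
  obtain ⟨l, rfl⟩ : ∃ t, l = t + 1 := ⟨l - 1, by omega⟩
  simp only [Nat.add_sub_cancel]
  induction q with
  | zero =>
    rw [Nat.add_zero, Nat.factorial_succ]
    have : (l.factorial : ℚ) ≠ 0 := by positivity
    simp; field_simp
  | succ q ih =>
    rw [prod_range_succ, ih]
    have : l + 1 + (q + 1) = (l + 1 + q) + 1 := by ring
    rw [this, Nat.factorial_succ (l + 1 + q)]
    push_cast
    ring

lemma alg0 (n : ℕ) (g : ℕ → ℚ) :
    ∑ i ∈ range (n + 1), cc i * cc (n - i) * g i =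
      ∑ q ∈ range (n + 1), (n : ℚ) ^ (n - q) / ((n - q).factorial * q.factorial) *
        ∑ i ∈ range (q + 1), (-1 : ℚ) ^ (q - i) * (q.choose i : ℚ) * ((i : ℚ) ^ q * g i) := by
  simp_rw [mul_sum]
  rw [sum_sigma']
  have key : ∀ i ∈ range (n + 1), cc i * cc (n - i) * g i =
      ∑ p ∈ range (n - i + 1), (n : ℚ) ^ (n - (i + p)) /
        ((n - (i + p)).factorial * (i + p).factorial) *
        ((-1 : ℚ) ^ p * ((i + p).choose i : ℚ) * ((i : ℚ) ^ (i + p) * g i)) := by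
    intro i hi
    have hi' : i ≤ n := by simp at hi; omega
    have h1 : ((n - i : ℕ) : ℚ) = (-(i : ℚ)) + n := by push_cast [hi']; ring
    unfold cc
    rw [h1, add_pow, sum_div, mul_sum, sum_mul]
    apply sum_congr rfl
    intro p hp
    have hp' : p ≤ n - i := by simp at hp; omega
    rw [Nat.cast_choose ℚ hp', Nat.cast_choose ℚ (Nat.le_add_right i p)]
    have e1 : n - i - p = n - (i + p) := by omega
    have e2 : i + p - i = p := by omega
    rw [e1, e2, neg_pow, pow_add]
    have f1 : ((n - i).factorial : ℚ) ≠ 0 := by positivity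
    have f2 : ((n - (i + p)).factorial : ℚ) ≠ 0 := by positivity
    have f3 : ((i + p).factorial : ℚ) ≠ 0 := by positivity
    have f4 : (p.factorial : ℚ) ≠ 0 := by positivity
    have f5 : (i.factorial : ℚ) ≠ 0 := by positivity
    field_simp
  rw [sum_congr rfl key, sum_sigma']
  refine sum_bij' (fun x _ => ⟨x.1 + x.2, x.1⟩) (fun x _ => ⟨x.2, x.1 - x.2⟩) ?_ ?_ ?_ ?_ ?_
  · rintro ⟨i, p⟩ h; simp at h ⊢; omega
  · rintro ⟨q, i⟩ h; simp at h ⊢; omega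
  · rintro ⟨i, p⟩ h; simp
  · rintro ⟨q, i⟩ h; simp at h ⊢; omega
  · rintro ⟨i, p⟩ h; simp

lemma full_sum (n l : ℕ) (hl : 1 ≤ l) :
    ∑ i ∈ range (n + 1), cc i * cc (n - i) * ((l : ℚ) * cc l / ((i : ℚ) + l)) =
      ∑ q ∈ range (n + 1), (n : ℚ) ^ (n - q) * (l : ℚ) ^ (l + q) /
        ((n - q).factorial * (l + q).factorial) := by
  rw [alg0]
  apply sum_congr rfl
  intro q _
  have : ∑ i ∈ range (q + 1), (-1 : ℚ) ^ (q - i) * (q.choose i : ℚ) *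
      ((i : ℚ) ^ q * ((l : ℚ) * cc l / ((i : ℚ) + l))) =
      (l : ℚ) * cc l * ∑ i ∈ range (q + 1), (-1 : ℚ) ^ (q - i) * (q.choose i : ℚ) *
      ((i : ℚ) ^ q / ((i : ℚ) + l)) := by
    rw [mul_sum]; apply sum_congr rfl; intro i _; ring
  rw [this, alt_inv q l hl q le_rfl, prod_asc q l hl]
  have hf : (l.factorial : ℚ) = l * ((l - 1).factorial : ℚ) := by
    exact_mod_cast (Nat.mul_factorial_pred (by omega)).symm
  unfold cc
  rw [hf, neg_pow (l : ℚ) q]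
  have hl' : (0 : ℚ) < l := by exact_mod_cast hl
  have f1 : ((n - q).factorial : ℚ) ≠ 0 := by positivity
  have f2 : ((l + q).factorial : ℚ) ≠ 0 := by positivity
  have f3 : (q.factorial : ℚ) ≠ 0 := by positivity
  have f4 : ((l - 1).factorial : ℚ) ≠ 0 := by positivity
  have : ((-1 : ℚ) ^ q) * (-1) ^ q = 1 := by rw [← mul_pow]; simp
  field_simp
  rw [pow_add]
  linear_combination ((l : ℚ) ^ l * (l : ℚ) ^ q) * this

lemma full_symm (n l : ℕ) :
    (∑ q ∈ range (n + 1), (n : ℚ) ^ (n - q) * (l : ℚ) ^ (l + q) /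
        ((n - q).factorial * (l + q).factorial)) +
    (∑ q ∈ range (l + 1), (l : ℚ) ^ (l - q) * (n : ℚ) ^ (n + q) /
        ((l - q).factorial * (n + q).factorial)) = cc (n + l) + cc n * cc l := by
  have h : cc (n + l) = ∑ t ∈ range (l + (n + 1)), (l : ℚ) ^ t * (n : ℚ) ^ (n + l - t) /
      (t.factorial * (n + l - t).factorial) := by
    unfold cc
    push_cast
    rw [add_comm (n : ℚ) l, add_pow, sum_div]
    rw [show l + (n + 1) = n + l + 1 by ring]
    apply sum_congr rfl
    intro t ht
    have ht' : t ≤ n + l := by simp at ht; omega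
    rw [Nat.cast_choose ℚ ht']
    have f1 : ((n + l).factorial : ℚ) ≠ 0 := by positivity
    have f2 : ((n + l - t).factorial : ℚ) ≠ 0 := by positivity
    have f3 : (t.factorial : ℚ) ≠ 0 := by positivity
    field_simp
  have h2 : ∑ q ∈ range (l + 1), (l : ℚ) ^ (l - q) * (n : ℚ) ^ (n + q) /
        ((l - q).factorial * (n + q).factorial) =
      (∑ t ∈ range l, (l : ℚ) ^ t * (n : ℚ) ^ (n + l - t) /
      (t.factorial * (n + l - t).factorial)) + cc n * cc l := by
    rw [← sum_range_reflect, sum_range_succ]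
    congr 1
    · apply sum_congr rfl
      intro t ht
      simp at ht
      rw [show l - (l + 1 - 1 - t) = t by omega, show n + (l + 1 - 1 - t) = n + l - t by omega]
    · simp [cc]; ring
  rw [h2, h, ← add_assoc, sum_range_add _ l (n + 1)]
  congr 1
  rw [add_comm]
  congr 1
  apply sum_congr rfl
  intro q hq
  simp at hq
  rw [show n + l - (l + q) = n - q by omega]
  ring

lemma range_split (n : ℕ) (hn : 1 ≤ n) (g : ℕ → ℚ) :
    ∑ i ∈ range (n + 1), g i = g 0 + (∑ i ∈ Ico 1 n, g i) + g n := by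
  rw [sum_range_succ, range_eq_Ico, ← sum_eq_sum_Ico_succ_bot (by omega)]

lemma quad (n l : ℕ) (hn : 1 ≤ n) (hl : 1 ≤ l) :
    cc (n + l) = 2 * cc n * cc l
      + cc l * (∑ i ∈ Ico 1 n, cc i * cc (n - i) * ((l : ℚ) / ((i : ℚ) + l)))
      + cc n * (∑ i ∈ Ico 1 l, cc i * cc (l - i) * ((n : ℚ) / ((i : ℚ) + n))) := by
  have h := full_symm n l
  rw [← full_sum n l hl, ← full_sum l n hn, range_split n hn, range_split l hl] at h
  have hn' : (0 : ℚ) < n := by exact_mod_cast hn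
  have hl' : (0 : ℚ) < l := by exact_mod_cast hl
  simp only [cc_zero, Nat.sub_zero, Nat.sub_self, Nat.cast_zero, zero_add, one_mul, mul_one] at h
  rw [mul_sum, mul_sum]
  have e1 : ∀ i, cc l * (cc i * cc (n - i) * ((l : ℚ) / ((i : ℚ) + l))) =
    cc i * cc (n - i) * ((l : ℚ) * cc l / ((i : ℚ) + l)) := fun i => by ring
  have e2 : ∀ i, cc n * (cc i * cc (l - i) * ((n : ℚ) / ((i : ℚ) + n))) =
    cc i * cc (l - i) * ((n : ℚ) * cc n / ((i : ℚ) + n)) := fun i => by ring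
  simp_rw [e1, e2]
  have e3 : cc n * ((l : ℚ) * cc l / l) = cc n * cc l := by field_simp
  have e4 : cc l * ((n : ℚ) * cc n / n) = cc n * cc l := by field_simp
  have e5 : cc n * ((l : ℚ) * cc l / (n + l)) + cc l * (n * cc n / (l + n)) = cc n * cc l := by
    field_simp; ring
  linarith

lemma lin (n : ℕ) (hn : 1 ≤ n) :
    ∑ i ∈ Ico 1 n, cc i * cc (n - i) * (1 / (i : ℚ)) = cc n * (1 - 1 / n) := by
  have h := alg0 n (fun i => 1 / (i : ℚ))
  rw [range_split n hn] at h
  have hz : ∀ q ∈ range (n + 1), q ≠ 1 → (n : ℚ) ^ (n - q) / ((n - q).factorial * q.factorial) *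
        ∑ i ∈ range (q + 1), (-1 : ℚ) ^ (q - i) * (q.choose i : ℚ) * ((i : ℚ) ^ q * (1 / (i : ℚ)))
        = 0 := by
    intro q _ hq
    rcases Nat.eq_zero_or_pos q with rfl | hq0
    · simp
    · have : ∑ i ∈ range (q + 1), (-1 : ℚ) ^ (q - i) * (q.choose i : ℚ) *
          ((i : ℚ) ^ q * (1 / (i : ℚ))) = 0 := by
        rw [← alt_pow q (q - 1) (by omega)]
        apply sum_congr rfl
        intro i _
        congr 1
        rcases Nat.eq_zero_or_pos i with rfl | hi
        · have : q - 1 ≠ 0 := by omega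
          simp [this]
        · have : (0 : ℚ) < i := by exact_mod_cast hi
          obtain ⟨q, rfl⟩ : ∃ t, q = t + 1 := ⟨q - 1, by omega⟩
          simp only [Nat.add_sub_cancel]
          rw [pow_succ]; field_simp
      rw [this, mul_zero]
  rw [sum_eq_single_of_mem 1 (by simp; omega) hz] at h
  have hn' : (0 : ℚ) < n := by exact_mod_cast hn
  simp [sum_range_succ, cc_zero] at h
  have e : (n : ℚ) ^ (n - 1) / ((n - 1).factorial : ℚ) = cc n := by
    unfold cc
    obtain ⟨n, rfl⟩ : ∃ t, n = t + 1 := ⟨n - 1, by omega⟩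
    simp only [Nat.add_sub_cancel]
    rw [Nat.factorial_succ, pow_succ]
    have : (n.factorial : ℚ) ≠ 0 := by positivity
    push_cast at hn' ⊢
    field_simp
  rw [e] at h
  simp only [one_div]
  linarith

end Hurw

namespace Hurw
open Finset

section
variable {ι : Type*} [DecidableEq ι]

lemma altSub (a : ι → ℚ) (V : Finset ι) : ∀ (d : ℕ) (x : ℚ), d < V.card →
    ∑ S ∈ V.powerset, (-1 : ℚ) ^ S.card * (x + ∑ i ∈ S, a i) ^ d = 0 := by
  induction V using Finset.induction_on with
  | empty => intro d x h; simp at h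
  | insert l V hl ih =>
    intro d x h
    rw [card_insert_of_notMem hl] at h
    rw [sum_powerset_insert hl]
    have h1 : ∀ S ∈ V.powerset, (-1 : ℚ) ^ (insert l S).card * (x + ∑ i ∈ insert l S, a i) ^ d =
        -∑ e ∈ range (d + 1), (a l) ^ (d - e) * (d.choose e : ℚ) *
          ((-1 : ℚ) ^ S.card * (x + ∑ i ∈ S, a i) ^ e) := by
      intro S hS
      have hlS : l ∉ S := fun h => hl (mem_powerset.1 hS h)
      rw [card_insert_of_notMem hlS, sum_insert hlS,
        show x + (a l + ∑ i ∈ S, a i) = (x + ∑ i ∈ S, a i) + a l by ring, add_pow, mul_sum,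
        ← sum_neg_distrib]
      apply sum_congr rfl
      intro e _
      rw [pow_succ]; ring
    rw [sum_congr rfl h1, sum_neg_distrib, sum_comm, sum_range_succ]
    have h2 : ∑ e ∈ range d, ∑ S ∈ V.powerset, (a l) ^ (d - e) * (d.choose e : ℚ) *
          ((-1 : ℚ) ^ S.card * (x + ∑ i ∈ S, a i) ^ e) = 0 := by
      apply sum_eq_zero
      intro e he
      rw [← mul_sum, ih e x (by simp at he; omega), mul_zero]
    rw [h2]
    simp

lemma hur1 (a : ι → ℚ) (ha : ∀ i, 0 ≤ a i) (J : Finset ι) (x y : ℚ) (hx : 0 < x) :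
    ∑ S ∈ J.powerset, x * (x + ∑ i ∈ S, a i) ^ ((S.card : ℤ) - 1) *
      (y + ∑ i ∈ J \ S, a i) ^ (J \ S).card = (x + y + ∑ i ∈ J, a i) ^ J.card := by
  set M := x + y + ∑ i ∈ J, a i with hM
  have hpos : ∀ S : Finset ι, 0 < x + ∑ i ∈ S, a i := fun S =>
    add_pos_of_pos_of_nonneg hx (sum_nonneg fun i _ => ha i)
  have h1 : ∀ S ∈ J.powerset, x * (x + ∑ i ∈ S, a i) ^ ((S.card : ℤ) - 1) *
      (y + ∑ i ∈ J \ S, a i) ^ (J \ S).card =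
      ∑ U ∈ (J \ S).powerset, x * ((-1) ^ U.card * (x + ∑ i ∈ S, a i) ^
        (((S ∪ U).card : ℤ) - 1)) * M ^ ((J.card - (S ∪ U).card)) := by
    intro S hS
    rw [mem_powerset] at hS
    have : y + ∑ i ∈ J \ S, a i = -(x + ∑ i ∈ S, a i) + M := by
      rw [hM, ← sum_sdiff hS]; ring
    rw [this, ← sum_pow_mul_eq_add_pow, mul_sum]
    apply sum_congr rfl
    intro U hU
    rw [mem_powerset] at hU
    have hd : Disjoint S U := disjoint_of_subset_right hU disjoint_sdiff
    rw [card_union_of_disjoint hd, card_sdiff_of_subset hS, neg_pow]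
    rw [show J.card - S.card - U.card = J.card - (S.card + U.card) by omega]
    push_cast
    rw [show (S.card : ℤ) + U.card - 1 = (S.card - 1) + U.card by ring,
      zpow_add₀ (hpos S).ne', zpow_natCast]
    ring
  rw [sum_congr rfl h1, sum_sigma']
  have h2 : ∑ p ∈ J.powerset.sigma (fun S => (J \ S).powerset),
      x * ((-1) ^ p.2.card * (x + ∑ i ∈ p.1, a i) ^
        (((p.1 ∪ p.2).card : ℤ) - 1)) * M ^ ((J.card - (p.1 ∪ p.2).card)) =
      ∑ p ∈ J.powerset.sigma (fun V => V.powerset),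
      x * ((-1) ^ (p.1.card + p.2.card) * (x + ∑ i ∈ p.2, a i) ^
        ((p.1.card : ℤ) - 1)) * M ^ ((J.card - p.1.card)) := by
    refine sum_bij' (fun p _ => ⟨p.1 ∪ p.2, p.1⟩) (fun p _ => ⟨p.2, p.1 \ p.2⟩) ?_ ?_ ?_ ?_ ?_
    · rintro ⟨S, U⟩ h
      simp only [mem_sigma, mem_powerset] at h ⊢
      exact ⟨union_subset h.1 (h.2.trans sdiff_subset), subset_union_left⟩
    · rintro ⟨V, S⟩ h
      simp only [mem_sigma, mem_powerset] at h ⊢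
      exact ⟨h.2.trans h.1, sdiff_subset_sdiff h.1 le_rfl⟩
    · rintro ⟨S, U⟩ h
      simp only [mem_sigma, mem_powerset] at h
      have hd : Disjoint S U := disjoint_of_subset_right h.2 disjoint_sdiff
      simp only [union_sdiff_cancel_left hd]
    · rintro ⟨V, S⟩ h
      simp only [mem_sigma, mem_powerset] at h
      simp only [union_sdiff_of_subset h.2]
    · rintro ⟨S, U⟩ h
      simp only [mem_sigma, mem_powerset] at h
      have hd : Disjoint S U := disjoint_of_subset_right h.2 disjoint_sdiff
      simp only
      congr 3
      rw [card_union_of_disjoint hd, show S.card + U.card + S.card = U.card + 2 * S.card by ring,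
        pow_add, pow_mul]
      simp
  rw [h2, sum_sigma, sum_eq_single_of_mem ∅ (by simp)]
  · simp
    rw [mul_inv_cancel₀ hx.ne', one_mul]
  · intro V hV hne
    have hc : 0 < V.card := card_pos.2 (nonempty_iff_ne_empty.2 hne)
    have := altSub a V (V.card - 1) x (by omega)
    have e : ∑ S ∈ V.powerset, x * ((-1) ^ (V.card + S.card) * (x + ∑ i ∈ S, a i) ^
        ((V.card : ℤ) - 1)) * M ^ ((J.card - V.card)) =
        (x * (-1) ^ V.card * M ^ (J.card - V.card)) * ∑ S ∈ V.powerset,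
          (-1 : ℚ) ^ S.card * (x + ∑ i ∈ S, a i) ^ (V.card - 1) := by
      rw [mul_sum]
      apply sum_congr rfl
      intro S _
      rw [show (V.card : ℤ) - 1 = ((V.card - 1 : ℕ) : ℤ) by omega, zpow_natCast, pow_add]
      ring
    simp only
    rw [e, this, mul_zero]

lemma swapSum (J : Finset ι) (h : Finset ι → ι → ℚ) :
    ∑ S ∈ J.powerset, ∑ l ∈ J \ S, h S l = ∑ l ∈ J, ∑ S ∈ (J.erase l).powerset, h S l := by
  apply sum_comm'
  intro S l
  simp only [mem_powerset, mem_sdiff, subset_erase]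
  tauto

lemma hur2 (a : ι → ℚ) (ha : ∀ i, 0 ≤ a i) (J : Finset ι) (x y : ℚ) (hx : 0 < x) (hy : 0 < y) :
    ∑ S ∈ J.powerset, x * (x + ∑ i ∈ S, a i) ^ ((S.card : ℤ) - 1) *
      (y * (y + ∑ i ∈ J \ S, a i) ^ (((J \ S).card : ℤ) - 1)) =
      (x + y) * (x + y + ∑ i ∈ J, a i) ^ ((J.card : ℤ) - 1) := by
  have hpos : ∀ S : Finset ι, 0 < y + ∑ i ∈ S, a i := fun S =>
    add_pos_of_pos_of_nonneg hy (sum_nonneg fun i _ => ha i)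
  have hM : 0 < x + y + ∑ i ∈ J, a i :=
    add_pos_of_pos_of_nonneg (by linarith) (sum_nonneg fun i _ => ha i)
  have h1 : ∀ S ∈ J.powerset, x * (x + ∑ i ∈ S, a i) ^ ((S.card : ℤ) - 1) *
      (y * (y + ∑ i ∈ J \ S, a i) ^ (((J \ S).card : ℤ) - 1)) =
      x * (x + ∑ i ∈ S, a i) ^ ((S.card : ℤ) - 1) * (y + ∑ i ∈ J \ S, a i) ^ (J \ S).card -
      ∑ l ∈ J \ S, a l * (x * (x + ∑ i ∈ S, a i) ^ ((S.card : ℤ) - 1) *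
        (y + a l + ∑ i ∈ (J.erase l) \ S, a i) ^ ((J.erase l) \ S).card) := by
    intro S hS
    have e : ∀ l ∈ J \ S, a l * (x * (x + ∑ i ∈ S, a i) ^ ((S.card : ℤ) - 1) *
        (y + a l + ∑ i ∈ (J.erase l) \ S, a i) ^ ((J.erase l) \ S).card) =
        a l * (x * (x + ∑ i ∈ S, a i) ^ ((S.card : ℤ) - 1) *
          (y + ∑ i ∈ J \ S, a i) ^ (((J \ S).card : ℤ) - 1)) := by
      intro l hl
      have h3 : (J.erase l) \ S = (J \ S).erase l := by
        ext t; simp only [mem_sdiff, mem_erase]; tauto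
      rw [h3, card_erase_of_mem hl, add_assoc, add_sum_erase _ _ hl]
      have : 0 < (J \ S).card := card_pos.2 ⟨l, hl⟩
      rw [show ((J \ S).card : ℤ) - 1 = (((J \ S).card - 1 : ℕ) : ℤ) by omega, zpow_natCast]
    rw [sum_congr rfl e, ← sum_mul, zpow_sub_one₀ (hpos _).ne', zpow_natCast]
    have := hpos (J \ S)
    field_simp
    ring
  rw [sum_congr rfl h1, sum_sub_distrib, hur1 a ha J x y hx, swapSum]
  have h2 : ∀ l ∈ J, ∑ S ∈ (J.erase l).powerset, a l * (x * (x + ∑ i ∈ S, a i) ^ ((S.card : ℤ) - 1) *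
        (y + a l + ∑ i ∈ (J.erase l) \ S, a i) ^ ((J.erase l) \ S).card) =
        a l * (x + y + ∑ i ∈ J, a i) ^ ((J.card : ℤ) - 1) := by
    intro l hl
    rw [← mul_sum, hur1 a ha _ x (y + a l) hx, ← add_assoc, add_assoc (x + y), add_sum_erase _ _ hl,
      card_erase_of_mem hl]
    have : 0 < J.card := card_pos.2 ⟨l, hl⟩
    rw [show (J.card : ℤ) - 1 = ((J.card - 1 : ℕ) : ℤ) by omega, zpow_natCast]
  rw [sum_congr rfl h2, ← sum_mul, zpow_sub_one₀ hM.ne', zpow_natCast]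
  field_simp
  ring

lemma hur3 (a : ι → ℚ) (ha : ∀ i, 0 ≤ a i) (J : Finset ι) (x y : ℚ) (hx : 0 < x) (hy : 0 < y) :
    ∑ S ∈ J.powerset, x * (x + ∑ i ∈ S, a i) ^ ((S.card : ℤ) - 1) *
      (y + ∑ i ∈ J \ S, a i) ^ (((J \ S).card : ℤ) - 2) =
      (x + y) * (x + y + ∑ i ∈ J, a i) ^ ((J.card : ℤ) - 1) / y ^ 2 -
      (1 / y) * ∑ l ∈ J, a l * (a l + x + y) / (a l + y) *
        (x + y + ∑ i ∈ J, a i) ^ ((J.card : ℤ) - 2) := by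
  have hpos : ∀ S : Finset ι, 0 < y + ∑ i ∈ S, a i := fun S =>
    add_pos_of_pos_of_nonneg hy (sum_nonneg fun i _ => ha i)
  have h1 : ∀ S ∈ J.powerset, x * (x + ∑ i ∈ S, a i) ^ ((S.card : ℤ) - 1) *
      (y + ∑ i ∈ J \ S, a i) ^ (((J \ S).card : ℤ) - 2) =
      (1 / y ^ 2) * (x * (x + ∑ i ∈ S, a i) ^ ((S.card : ℤ) - 1) *
        (y * (y + ∑ i ∈ J \ S, a i) ^ (((J \ S).card : ℤ) - 1))) -
      ∑ l ∈ J \ S, (a l / (y * (a l + y))) * (x * (x + ∑ i ∈ S, a i) ^ ((S.card : ℤ) - 1) *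
        ((y + a l) * (y + a l + ∑ i ∈ (J.erase l) \ S, a i) ^
          ((((J.erase l) \ S).card : ℤ) - 1))) := by
    intro S hS
    have e : ∀ l ∈ J \ S, (a l / (y * (a l + y))) * (x * (x + ∑ i ∈ S, a i) ^ ((S.card : ℤ) - 1) *
        ((y + a l) * (y + a l + ∑ i ∈ (J.erase l) \ S, a i) ^
          ((((J.erase l) \ S).card : ℤ) - 1))) =
        a l * (x * (x + ∑ i ∈ S, a i) ^ ((S.card : ℤ) - 1) *
          (y + ∑ i ∈ J \ S, a i) ^ (((J \ S).card : ℤ) - 2) / y) := by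
      intro l hl
      have h3 : (J.erase l) \ S = (J \ S).erase l := by
        ext t; simp only [mem_sdiff, mem_erase]; tauto
      rw [h3, card_erase_of_mem hl, add_assoc y, add_sum_erase _ _ hl]
      have : 0 < (J \ S).card := card_pos.2 ⟨l, hl⟩
      rw [show (((J \ S).card - 1 : ℕ) : ℤ) - 1 = ((J \ S).card : ℤ) - 2 by omega]
      have : 0 < a l + y := add_pos_of_nonneg_of_pos (ha l) hy
      field_simp
      ring
    rw [sum_congr rfl e, ← sum_mul]
    rw [show ((J \ S).card : ℤ) - 1 = (((J \ S).card : ℤ) - 2) + 1 by ring,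
      zpow_add_one₀ (hpos _).ne']
    field_simp
    ring
  rw [sum_congr rfl h1, sum_sub_distrib, ← mul_sum, hur2 a ha J x y hx hy, swapSum]
  rw [mul_sum]
  congr 1
  · ring
  · apply sum_congr rfl
    intro l hl
    have hl' : 0 < a l + y := add_pos_of_nonneg_of_pos (ha l) hy
    rw [← mul_sum, hur2 a ha _ x (y + a l) hx (by linarith), ← add_assoc, add_assoc (x + y),
      add_sum_erase _ _ hl, card_erase_of_mem hl]
    have : 0 < J.card := card_pos.2 ⟨l, hl⟩
    rw [show ((J.card - 1 : ℕ) : ℤ) - 1 = (J.card : ℤ) - 2 by omega]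
    field_simp
    ring

end
end Hurw

namespace Hurw
open Finset

/-- `f n = n^(n+1)/n!`. -/
noncomputable def ff (n : ℕ) : ℚ := (n : ℚ) * cc n

noncomputable def qq (d l : ℕ) : ℚ :=
  ∑ i ∈ Ico 1 d, cc i * cc (d - i) * ((l : ℚ) / ((i : ℚ) + l))

section
variable {ι : Type*} [DecidableEq ι]

noncomputable def BB (a : ι → ℕ) (J : Finset ι) (r s : ℕ) : ℚ :=
  ∑ S ∈ J.powerset, ((r : ℚ) + ∑ i ∈ S, (a i : ℚ)) ^ ((S.card : ℤ) - 2) *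
      ((s : ℚ) + ∑ i ∈ J \ S, (a i : ℚ)) ^ (((J \ S).card : ℤ) - 2)

noncomputable def CB (a : ι → ℕ) (J : Finset ι) (r s : ℕ) : ℚ :=
  ∑ S ∈ J.powerset, ((r : ℚ) + ∑ i ∈ S, (a i : ℚ)) ^ ((S.card : ℤ) - 1) *
      ((s : ℚ) + ∑ i ∈ J \ S, (a i : ℚ)) ^ (((J \ S).card : ℤ) - 2)

lemma powerset_compl (J : Finset ι) (h : Finset ι → Finset ι → ℚ) :
    ∑ S ∈ J.powerset, h S (J \ S) = ∑ S ∈ J.powerset, h (J \ S) S := by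
  refine sum_bij' (fun S _ => J \ S) (fun S _ => J \ S) ?_ ?_ ?_ ?_ ?_
  · intro S _; simp
  · intro S _; simp
  · intro S h; exact Finset.sdiff_sdiff_eq_self (mem_powerset.1 h)
  · intro S h; exact Finset.sdiff_sdiff_eq_self (mem_powerset.1 h)
  · intro S h; simp only [Finset.sdiff_sdiff_eq_self (mem_powerset.1 h)]

lemma BB_CB (a : ι → ℕ) (J : Finset ι) (r s : ℕ) (hr : 1 ≤ r) (hs : 1 ≤ s) :
    ((r : ℚ) + s + ∑ i ∈ J, (a i : ℚ)) * BB a J r s = CB a J r s + CB a J s r := by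
  have hr' : (0 : ℚ) < r := by exact_mod_cast hr
  have hs' : (0 : ℚ) < s := by exact_mod_cast hs
  have e : CB a J s r = ∑ S ∈ J.powerset,
      ((s : ℚ) + ∑ i ∈ J \ S, (a i : ℚ)) ^ (((J \ S).card : ℤ) - 1) *
      ((r : ℚ) + ∑ i ∈ S, (a i : ℚ)) ^ ((S.card : ℤ) - 2) := by
    unfold CB
    exact powerset_compl J (fun S T => ((s : ℚ) + ∑ i ∈ S, (a i : ℚ)) ^ ((S.card : ℤ) - 1) *
      ((r : ℚ) + ∑ i ∈ T, (a i : ℚ)) ^ ((T.card : ℤ) - 2))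
  rw [e, CB, BB, mul_sum, ← sum_add_distrib]
  apply sum_congr rfl
  intro S hS
  rw [mem_powerset] at hS
  have p1 : 0 < (r : ℚ) + ∑ i ∈ S, (a i : ℚ) := by positivity
  have p2 : 0 < (s : ℚ) + ∑ i ∈ J \ S, (a i : ℚ) := by positivity
  rw [← sum_sdiff hS]
  rw [show (S.card : ℤ) - 1 = ((S.card : ℤ) - 2) + 1 by ring, zpow_add_one₀ p1.ne',
    show ((J \ S).card : ℤ) - 1 = (((J \ S).card : ℤ) - 2) + 1 by ring, zpow_add_one₀ p2.ne']
  ring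

lemma cut_i (a : ι → ℕ) (J : Finset ι) (d : ℕ) (hd : 1 ≤ d) (m : ℚ)
    (hm : m = d + ∑ i ∈ J, (a i : ℚ)) :
    m * ∑ r ∈ Ico 1 d, ff r * ff (d - r) * BB a J r (d - r) =
      2 * ((d - 1) * cc d * m ^ ((J.card : ℤ) - 1) -
        m ^ ((J.card : ℤ) - 2) * ∑ l ∈ J, ((a l : ℚ) + d) * qq d (a l)) := by
  have h1 : m * ∑ r ∈ Ico 1 d, ff r * ff (d - r) * BB a J r (d - r) =
      2 * ∑ r ∈ Ico 1 d, ff (d - r) * ff r * CB a J (d - r) r := by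
    rw [two_mul]
    have e : ∑ r ∈ Ico 1 d, ff (d - r) * ff r * CB a J (d - r) r =
        ∑ r ∈ Ico 1 d, ff (d - r) * ff r * CB a J r (d - r) := by
      refine sum_bij' (fun r _ => d - r) (fun r _ => d - r) ?_ ?_ ?_ ?_ ?_
      · intro r h; simp at h ⊢; omega
      · intro r h; simp at h ⊢; omega
      · intro r h; simp at h ⊢; omega
      · intro r h; simp at h ⊢; omega
      · intro r h
        simp at h
        rw [show d - (d - r) = r by omega]; ring
    nth_rewrite 2 [e]
    rw [← sum_add_distrib, mul_sum]
    apply sum_congr rfl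
    intro r hr
    simp at hr
    have := BB_CB a J r (d - r) (by omega) (by omega)
    rw [show (r : ℚ) + ((d - r : ℕ) : ℚ) + ∑ i ∈ J, (a i : ℚ) = m by
      rw [hm]; push_cast [hr.2.le]; ring] at this
    linear_combination (ff r * ff (d - r)) * this
  rw [h1]
  congr 1
  have h2 : ∀ s ∈ Ico 1 d, ff (d - s) * ff s * CB a J (d - s) s =
      d * m ^ ((J.card : ℤ) - 1) * (cc s * cc (d - s) * (1 / (s : ℚ))) -
      m ^ ((J.card : ℤ) - 2) * ∑ l ∈ J, ((a l : ℚ) + d) *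
        (cc s * cc (d - s) * ((a l : ℚ) / ((s : ℚ) + a l))) := by
    intro s hs
    simp at hs
    have hs' : (0 : ℚ) < s := by exact_mod_cast hs.1
    have hr' : (0 : ℚ) < ((d - s : ℕ) : ℚ) := by
      have : 0 < d - s := by omega
      exact_mod_cast this
    have h3 := hur3 (fun i => (a i : ℚ)) (fun i => by positivity) J ((d - s : ℕ) : ℚ) s hr' hs'
    rw [show ((d - s : ℕ) : ℚ) + (s : ℚ) = d by push_cast [hs.2.le]; ring, ← hm] at h3
    simp_rw [mul_assoc] at h3
    rw [← mul_sum] at h3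
    have h4 : ((d - s : ℕ) : ℚ) * CB a J (d - s) s = d * m ^ ((J.card : ℤ) - 1) / (s : ℚ) ^ 2 -
      (1 / (s : ℚ)) * ∑ l ∈ J, ((a l : ℚ) * ((a l : ℚ) + d) / ((a l : ℚ) + s)) *
        m ^ ((J.card : ℤ) - 2) := by
      unfold CB
      rw [h3]
      congr 1
      · congr 1
        apply sum_congr rfl
        intro l _
        rw [show (a l : ℚ) + ((d - s : ℕ) : ℚ) + (s : ℚ) = a l + d by
          push_cast [hs.2.le]; ring]
    unfold ff
    rw [show ((d - s : ℕ) : ℚ) * cc (d - s) * ((s : ℚ) * cc s) * CB a J (d - s) s =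
      cc (d - s) * ((s : ℚ) * cc s) * (((d - s : ℕ) : ℚ) * CB a J (d - s) s) by ring, h4]
    rw [mul_sub]
    congr 1
    · field_simp
    · rw [mul_sum, mul_sum, mul_sum]
      apply sum_congr rfl
      intro l _
      have : (0 : ℚ) < s + a l := by positivity
      rw [add_comm (a l : ℚ) s]
      field_simp
  rw [sum_congr rfl h2, sum_sub_distrib, ← mul_sum, lin d hd, ← mul_sum, sum_comm]
  have hd' : (0 : ℚ) < d := by exact_mod_cast hd
  congr 1
  · field_simp
  · congr 1
    apply sum_congr rfl
    intro l _
    rw [qq, mul_sum]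

lemma offswap (C : Finset ι) (h : ι → ι → ℚ) :
    ∑ i ∈ C, ∑ j ∈ C.erase i, h i j = ∑ i ∈ C, ∑ j ∈ C.erase i, h j i := by
  apply sum_comm'
  intro i j
  simp only [mem_erase]
  constructor
  · rintro ⟨h1, h2, h3⟩; exact ⟨⟨h2.symm, h1⟩, h3⟩
  · rintro ⟨⟨h2, h1⟩, h3⟩; exact ⟨h1, h2.symm, h3⟩

theorem main_id (C : Finset ι) (hC : C.Nonempty) (a : ι → ℕ) (ha : ∀ c ∈ C, 1 ≤ a c)
    (m : ℚ) (hm : m = ∑ c ∈ C, (a c : ℚ)) :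
    2 * (m + C.card - 2) * m ^ ((C.card : ℤ) - 3) * ∏ c ∈ C, ff (a c) =
      (∑ i ∈ C, ∑ j ∈ C.erase i, (a i : ℚ) * a j * (m ^ ((C.card : ℤ) - 4) *
        (ff (a i + a j) * ∏ c ∈ (C.erase i).erase j, ff (a c)))) +
      ∑ i ∈ C, (a i : ℚ) * ∑ r ∈ Ico 1 (a i),
        ff r * ff (a i - r) * (∏ c ∈ C.erase i, ff (a c)) * BB a (C.erase i) r (a i - r) := by
  have hap : ∀ c ∈ C, (0 : ℚ) < a c := fun c hc => by exact_mod_cast ha c hc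
  have hm0 : 0 < m := by rw [hm]; exact sum_pos hap hC
  set P := ∏ c ∈ C, ff (a c) with hP
  have hfp : ∀ c ∈ C, 0 < ff (a c) := fun c hc => mul_pos (hap c hc) (cc_pos _)
  have cut : ∀ i ∈ C, m * ((a i : ℚ) * ∑ r ∈ Ico 1 (a i),
        ff r * ff (a i - r) * (∏ c ∈ C.erase i, ff (a c)) * BB a (C.erase i) r (a i - r)) =
      2 * P * m ^ ((C.card : ℤ) - 2) * ((a i : ℚ) - 1) - 
      m ^ ((C.card : ℤ) - 3) * P * ∑ l ∈ C.erase i, 2 * (((a l : ℚ) + a i) * (qq (a i) (a l) / cc (a i))) := by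
    intro i hi
    have h := cut_i a (C.erase i) (a i) (ha i hi) m (by rw [hm, add_sum_erase C (fun c => (a c : ℚ)) hi])
    have hPi : P = ff (a i) * ∏ c ∈ C.erase i, ff (a c) := (mul_prod_erase C _ hi).symm
    rw [card_erase_of_mem hi] at h
    have hc : 0 < C.card := card_pos.2 hC
    rw [show ((C.card - 1 : ℕ) : ℤ) - 1 = (C.card : ℤ) - 2 by omega,
      show ((C.card - 1 : ℕ) : ℤ) - 2 = (C.card : ℤ) - 3 by omega] at h
    have e1 : ∑ r ∈ Ico 1 (a i),
        ff r * ff (a i - r) * (∏ c ∈ C.erase i, ff (a c)) * BB a (C.erase i) r (a i - r) =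
        (∏ c ∈ C.erase i, ff (a c)) * 
        ∑ r ∈ Ico 1 (a i), ff r * ff (a i - r) * BB a (C.erase i) r (a i - r) := by
      rw [mul_sum]; apply sum_congr rfl; intro r _; ring
    have e2 : ∑ l ∈ C.erase i, 2 * (((a l : ℚ) + a i) * (qq (a i) (a l) / cc (a i))) =
      2 / cc (a i) * ∑ l ∈ C.erase i, ((a l : ℚ) + a i) * qq (a i) (a l) := by
      rw [mul_sum]; apply sum_congr rfl; intro r _; ring
    have hcp := cc_pos (a i)
    rw [e1, e2, hPi, ff]
    field_simp
    linear_combination ((a i : ℚ) * ∏ c ∈ C.erase i, ff (a c)) * h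
  have join : ∀ i ∈ C, ∀ j ∈ C.erase i, m * ((a i : ℚ) * a j * (m ^ ((C.card : ℤ) - 4) *
        (ff (a i + a j) * ∏ c ∈ (C.erase i).erase j, ff (a c)))) =
      m ^ ((C.card : ℤ) - 3) * P * (2 * ((a i : ℚ) + a j) +
        ((a j : ℚ) + a i) * (qq (a i) (a j) / cc (a i)) + 
        ((a i : ℚ) + a j) * (qq (a j) (a i) / cc (a j))) := by
    intro i hi j hj
    have hj' := mem_of_mem_erase hj
    have hPi : P = ff (a i) * (ff (a j) * ∏ c ∈ (C.erase i).erase j, ff (a c)) := by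
      rw [mul_prod_erase (C.erase i) (fun c => ff (a c)) hj,
        mul_prod_erase C (fun c => ff (a c)) hi]
    have hq := quad (a i) (a j) (ha i hi) (ha j hj')
    rw [← qq, ← qq] at hq
    rw [show (C.card : ℤ) - 3 = ((C.card : ℤ) - 4) + 1 by ring, zpow_add_one₀ hm0.ne', hPi, ff, hq,
      ff, ff]
    have := cc_pos (a i)
    have := cc_pos (a j)
    push_cast
    field_simp
    ring
  apply mul_left_cancel₀ hm0.ne'
  rw [mul_add, mul_sum, mul_sum, sum_congr rfl cut]
  have j2 : ∑ i ∈ C, m * ∑ j ∈ C.erase i, ((a i : ℚ) * a j * (m ^ ((C.card : ℤ) - 4) *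
        (ff (a i + a j) * ∏ c ∈ (C.erase i).erase j, ff (a c)))) =
      m ^ ((C.card : ℤ) - 3) * P * (∑ i ∈ C, ∑ j ∈ C.erase i, 2 * ((a i : ℚ) + a j) +
        ∑ i ∈ C, ∑ j ∈ C.erase i, 2 * (((a j : ℚ) + a i) * (qq (a i) (a j) / cc (a i)))) := by
    have : ∑ i ∈ C, ∑ j ∈ C.erase i, 2 * (((a j : ℚ) + a i) * (qq (a i) (a j) / cc (a i))) =
        ∑ i ∈ C, ∑ j ∈ C.erase i, (((a j : ℚ) + a i) * (qq (a i) (a j) / cc (a i)) +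
        ((a i : ℚ) + a j) * (qq (a j) (a i) / cc (a j))) := by
      simp_rw [two_mul, sum_add_distrib]
      congr 1
      rw [offswap]
    rw [this, ← sum_add_distrib, mul_sum]
    apply sum_congr rfl
    intro i hi
    rw [← sum_add_distrib, mul_sum, mul_sum]
    apply sum_congr rfl
    intro j hj
    rw [join i hi j hj]; ring
  rw [j2, sum_sub_distrib, ← mul_sum, ← mul_sum]
  have s1 : ∑ i ∈ C, ((a i : ℚ) - 1) = m - C.card := by
    rw [sum_sub_distrib, ← hm]; simp
  have s2 : ∑ i ∈ C, ∑ j ∈ C.erase i, 2 * ((a i : ℚ) + a j) = 4 * (C.card - 1) * m := by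
    have : ∀ i ∈ C, ∑ j ∈ C.erase i, 2 * ((a i : ℚ) + a j) = 2 * ((C.card - 2) * a i + m) := by
      intro i hi
      rw [← mul_sum, sum_add_distrib, sum_const, card_erase_of_mem hi, hm,
        ← add_sum_erase C _ hi, nsmul_eq_mul, Nat.cast_pred (card_pos.2 hC)]
      ring
    rw [sum_congr rfl this, ← mul_sum, sum_add_distrib, ← mul_sum, ← hm, sum_const, nsmul_eq_mul]
    ring
  rw [s1, s2, show (C.card : ℤ) - 2 = ((C.card : ℤ) - 3) + 1 by ring, zpow_add_one₀ hm0.ne']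
  ring

end
end Hurw

namespace Hurw
open Finset
set_option linter.unusedSectionVars false

section
variable {γ : Type*} [DecidableEq γ]

/-- Sum of `u` over all words of length `n` with letters in `Z`. -/
noncomputable def SS (Z : Finset γ) : ℕ → (List γ → ℚ) → ℚ
  | 0, u => u []
  | n + 1, u => ∑ x ∈ Z, SS Z n (fun L => u (x :: L))

lemma SS_congr (Z : Finset γ) (n : ℕ) : ∀ (u v : List γ → ℚ),
    (∀ L, L.length = n → (∀ p ∈ L, p ∈ Z) → u L = v L) → SS Z n u = SS Z n v := by
  induction n with
  | zero => intro u v h; exact h [] rfl (by simp)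
  | succ n ih =>
    intro u v h
    simp only [SS]
    apply sum_congr rfl
    intro x hx
    apply ih
    intro L hL hZ
    apply h
    · simp [hL]
    · intro p hp
      rcases List.mem_cons.1 hp with rfl | hp
      · exact hx
      · exact hZ p hp

lemma SS_zero (Z : Finset γ) (n : ℕ) : SS Z n (fun _ => 0) = 0 := by
  induction n with
  | zero => rfl
  | succ n ih => simp [SS, ih]

lemma SS_add (Z : Finset γ) (n : ℕ) : ∀ (u v : List γ → ℚ),
    SS Z n (fun L => u L + v L) = SS Z n u + SS Z n v := by
  induction n with
  | zero => intro u v; rfl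
  | succ n ih => intro u v; simp only [SS, ih, sum_add_distrib]

lemma SS_sum {κ : Type*} (T : Finset κ) (Z : Finset γ) (n : ℕ) : ∀ (u : κ → List γ → ℚ),
    SS Z n (fun L => ∑ t ∈ T, u t L) = ∑ t ∈ T, SS Z n (u t) := by
  induction n with
  | zero => intro u; rfl
  | succ n ih =>
    intro u
    simp only [SS]
    rw [sum_comm]
    apply sum_congr rfl
    intro x _
    exact ih (fun t L => u t (x :: L))

lemma SS_subset (Z Z' : Finset γ) (h : Z' ⊆ Z) (n : ℕ) : ∀ (u : List γ → ℚ),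
    SS Z n (fun L => if ∀ p ∈ L, p ∈ Z' then u L else 0) = SS Z' n u := by
  induction n with
  | zero => intro u; simp [SS]
  | succ n ih =>
    intro u
    simp only [SS]
    rw [← sum_subset h (f := fun x => SS Z n
      (fun L => if ∀ p ∈ x :: L, p ∈ Z' then u (x :: L) else 0))]
    · apply sum_congr rfl
      intro x hx
      rw [← ih (fun L => u (x :: L))]
      apply SS_congr
      intro L _ _
      simp [hx]
    · intro x _ hx
      refine (SS_congr Z n _ (fun _ => 0) ?_).trans (SS_zero Z n)
      intro L _ _
      simp [hx]

lemma SS_shuffle (X Y : Finset γ) (hd : Disjoint X Y) (n : ℕ) : ∀ (u v : List γ → ℚ),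
    SS (X ∪ Y) n (fun L => u (L.filter (· ∈ X)) * v (L.filter (· ∈ Y))) =
      ∑ ij ∈ antidiagonal n, (n.choose ij.1 : ℚ) * (SS X ij.1 u * SS Y ij.2 v) := by
  induction n with
  | zero => intro u v; simp [SS]
  | succ n ih =>
    intro u v
    rw [Finset.sum_antidiagonal_choose_succ_mul (fun i j => SS X i u * SS Y j v)]
    simp only [SS]
    rw [sum_union hd, add_comm]
    congr 1
    · rw [show ∑ ij ∈ antidiagonal n, (n.choose ij.1 : ℚ) * (SS X ij.1 u *
          ∑ y ∈ Y, SS Y ij.2 (fun L => v (y :: L))) = ∑ y ∈ Y, ∑ ij ∈ antidiagonal n,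
          (n.choose ij.1 : ℚ) * (SS X ij.1 u * SS Y ij.2 (fun L => v (y :: L))) by
        rw [sum_comm]; simp_rw [mul_sum]]
      apply sum_congr rfl
      intro y hy
      have hyX : y ∉ X := fun h => disjoint_left.1 hd h hy
      rw [← ih u (fun L => v (y :: L))]
      apply SS_congr
      intro L _ _
      simp [hy, hyX]
    · rw [show ∑ ij ∈ antidiagonal n, (n.choose ij.2 : ℚ) * ((∑ x ∈ X, SS X ij.1
          (fun L => u (x :: L))) * SS Y ij.2 v) = ∑ x ∈ X, ∑ ij ∈ antidiagonal n,
          (n.choose ij.1 : ℚ) * (SS X ij.1 (fun L => u (x :: L)) * SS Y ij.2 v) by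
        rw [sum_comm]
        apply sum_congr rfl
        intro ij hij
        rw [HasAntidiagonal.mem_antidiagonal] at hij
        rw [sum_mul, mul_sum, ← Nat.choose_symm_of_eq_add hij.symm]]
      apply sum_congr rfl
      intro x hx
      have hxY : x ∉ Y := fun h => disjoint_left.1 hd hx h
      rw [← ih (fun L => u (x :: L)) v]
      apply SS_congr
      intro L _ _
      simp [hx, hxY]

end

section
variable {α : Type*} [DecidableEq α]

/-- Product of the transpositions in a word of pairs. -/
def Pr (L : List (α × α)) : Equiv.Perm α := (L.map (fun p => Equiv.swap p.1 p.2)).prod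

@[simp] lemma Pr_nil : Pr ([] : List (α × α)) = 1 := rfl
@[simp] lemma Pr_cons (p : α × α) (L : List (α × α)) :
    Pr (p :: L) = Equiv.swap p.1 p.2 * Pr L := by simp [Pr]

/-- Connectivity relation generated by the edges of a word. -/
def RR : List (α × α) → α → α → Prop
  | [], x, y => x = y
  | p :: L, x, y => RR L x y ∨ (RR L x p.1 ∧ RR L p.2 y) ∨ (RR L x p.2 ∧ RR L p.1 y)

lemma RR_refl (L : List (α × α)) (x : α) : RR L x x := by
  induction L with
  | nil => rfl
  | cons p L ih => exact Or.inl ih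

lemma RR_symm (L : List (α × α)) : ∀ {x y : α}, RR L x y → RR L y x := by
  induction L with
  | nil => intro x y h; exact Eq.symm h
  | cons p L ih =>
    rintro x y (h | ⟨h1, h2⟩ | ⟨h1, h2⟩)
    · exact Or.inl (ih h)
    · exact Or.inr (Or.inr ⟨ih h2, ih h1⟩)
    · exact Or.inr (Or.inl ⟨ih h2, ih h1⟩)

lemma RR_trans (L : List (α × α)) : ∀ {x y z : α}, RR L x y → RR L y z → RR L x z := by
  induction L with
  | nil => intro x y z h h'; exact Eq.trans h h'
  | cons p L ih =>
    rintro x y z (h | ⟨h1, h2⟩ | ⟨h1, h2⟩) (h' | ⟨h1', h2'⟩ | ⟨h1', h2'⟩)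
    · exact Or.inl (ih h h')
    · exact Or.inr (Or.inl ⟨ih h h1', h2'⟩)
    · exact Or.inr (Or.inr ⟨ih h h1', h2'⟩)
    · exact Or.inr (Or.inl ⟨h1, ih h2 h'⟩)
    · exact Or.inr (Or.inl ⟨h1, h2'⟩)
    · exact Or.inl (ih h1 h2')
    · exact Or.inr (Or.inr ⟨h1, ih h2 h'⟩)
    · exact Or.inl (ih h1 h2')
    · exact Or.inr (Or.inr ⟨h1, h2'⟩)

lemma RR_mem (L : List (α × α)) : ∀ p ∈ L, RR L p.1 p.2 := by
  induction L with
  | nil => intro p hp; simp at hp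
  | cons q L ih =>
    intro p hp
    rcases List.mem_cons.1 hp with rfl | hp
    · exact Or.inr (Or.inl ⟨RR_refl _ _, RR_refl _ _⟩)
    · exact Or.inl (ih p hp)

lemma RR_min (E : α → α → Prop) (hE : Equivalence E) (L : List (α × α)) :
    (∀ p ∈ L, E p.1 p.2) → ∀ x y, RR L x y → E x y := by
  induction L with
  | nil => intro _ x y h; cases h; exact hE.refl _
  | cons q L ih =>
    intro h x y
    have ih' := ih (fun p hp => h p (List.mem_cons_of_mem _ hp))
    have hq := h q (List.mem_cons_self)
    rintro (h | ⟨h1, h2⟩ | ⟨h1, h2⟩)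
    · exact ih' _ _ h
    · exact hE.trans (ih' _ _ h1) (hE.trans hq (ih' _ _ h2))
    · exact hE.trans (ih' _ _ h1) (hE.trans (hE.symm hq) (ih' _ _ h2))

lemma RR_equiv (L : List (α × α)) : Equivalence (RR L) :=
  ⟨RR_refl L, RR_symm L, RR_trans L⟩

lemma RR_mono (L L' : List (α × α)) (h : ∀ p ∈ L, p ∈ L') (x y : α) (hxy : RR L x y) :
    RR L' x y :=
  RR_min (RR L') (RR_equiv L') L (fun p hp => RR_mem L' p (h p hp)) x y hxy

lemma RR_Pr (L : List (α × α)) (x : α) : RR L x (Pr L x) := by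
  induction L with
  | nil => exact RR_refl _ _
  | cons p L ih =>
    rw [Pr_cons, Equiv.Perm.mul_apply]
    have h1 : RR (p :: L) x (Pr L x) := Or.inl ih
    have h2 : RR (p :: L) p.1 p.2 := RR_mem _ p (List.mem_cons_self)
    by_cases ha : Pr L x = p.1
    · rw [ha, Equiv.swap_apply_left]; rw [ha] at h1; exact RR_trans _ h1 h2
    · by_cases hb : Pr L x = p.2
      · rw [hb, Equiv.swap_apply_right]; rw [hb] at h1; exact RR_trans _ h1 (RR_symm _ h2)
      · rw [Equiv.swap_apply_of_ne_of_ne ha hb]; exact h1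

lemma filt (X : Finset α) (L : List (α × α))
    (h : ∀ p ∈ L, p ∈ X.offDiag ∨ (p.1 ∉ X ∧ p.2 ∉ X)) :
    (∀ x ∈ X, Pr L x ∈ X ∧ Pr L x = Pr (L.filter (· ∈ X.offDiag)) x) ∧
    (∀ x ∈ X, ∀ y, RR L x y → y ∈ X ∧ RR (L.filter (· ∈ X.offDiag)) x y) := by
  induction L with
  | nil =>
    refine ⟨fun x hx => ⟨hx, rfl⟩, fun x hx y hxy => ?_⟩
    cases hxy
    exact ⟨hx, RR_refl _ _⟩
  | cons p L ih =>
    obtain ⟨ih1, ih2⟩ := ih (fun p hp => h p (List.mem_cons_of_mem _ hp))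
    rcases h p (List.mem_cons_self) with hp | ⟨hp1, hp2⟩
    · have hp' := mem_offDiag.1 hp
      rw [List.filter_cons_of_pos (by simpa using hp)]
      refine ⟨fun x hx => ?_, fun x hx y hxy => ?_⟩
      · rw [Pr_cons, Pr_cons, Equiv.Perm.mul_apply, Equiv.Perm.mul_apply, ← (ih1 x hx).2]
        refine ⟨?_, rfl⟩
        rw [Equiv.swap_apply_def]
        split_ifs
        · exact hp'.2.1
        · exact hp'.1
        · exact (ih1 x hx).1
      · rcases hxy with h1 | ⟨h1, h2⟩ | ⟨h1, h2⟩
        · exact ⟨(ih2 x hx y h1).1, Or.inl (ih2 x hx y h1).2⟩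
        · exact ⟨(ih2 _ hp'.2.1 y h2).1, Or.inr (Or.inl ⟨(ih2 x hx _ h1).2,
            (ih2 _ hp'.2.1 y h2).2⟩)⟩
        · exact ⟨(ih2 _ hp'.1 y h2).1, Or.inr (Or.inr ⟨(ih2 x hx _ h1).2,
            (ih2 _ hp'.1 y h2).2⟩)⟩
    · rw [List.filter_cons_of_neg (by simp [hp1])]
      refine ⟨fun x hx => ?_, fun x hx y hxy => ?_⟩
      · rw [Pr_cons, Equiv.Perm.mul_apply, Equiv.swap_apply_of_ne_of_ne]
        · exact ih1 x hx
        · rintro h'; exact hp1 (h' ▸ (ih1 x hx).1)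
        · rintro h'; exact hp2 (h' ▸ (ih1 x hx).1)
      · rcases hxy with h1 | ⟨h1, h2⟩ | ⟨h1, h2⟩
        · exact ih2 x hx y h1
        · exact absurd (ih2 x hx _ h1).1 hp1
        · exact absurd (ih2 x hx _ h1).1 hp2

def Conn (A : Finset α) (L : List (α × α)) : Prop := ∀ x ∈ A, ∀ y ∈ A, RR L x y

def good (A : Finset α) (σ : Equiv.Perm α) (L : List (α × α)) : Prop :=
  (∀ x ∈ A, Pr L x = σ x) ∧ Conn A L

open Classical in
noncomputable def NN (A : Finset α) (σ : Equiv.Perm α) (n : ℕ) : ℚ :=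
  SS A.offDiag n (fun L => if good A σ L then 1 else 0)

lemma NN_inv (A : Finset α) (σ : Equiv.Perm α) (n : ℕ) (h : NN A σ n ≠ 0) :
    ∀ x ∈ A, σ x ∈ A := by
  classical
  by_contra hc
  apply h
  unfold NN
  refine (SS_congr _ n _ (fun _ => 0) ?_).trans (SS_zero _ n)
  intro L _ hL
  rw [if_neg]
  intro hg
  apply hc
  intro x hx
  rw [← hg.1 x hx]
  exact ((filt A L (fun p hp => Or.inl (hL p hp))).1 x hx).1

lemma split_count (A X : Finset α) (hX : X ⊆ A) (σ : Equiv.Perm α) (n : ℕ) :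
    (open Classical in SS A.offDiag n (fun L => if (∀ p ∈ L, p ∈ X.offDiag ∪ (A \ X).offDiag) then
      (if (Conn X L ∧ Conn (A \ X) L ∧ ∀ x ∈ A, Pr L x = σ x) then (1 : ℚ) else 0) else 0)) =
    ∑ ij ∈ antidiagonal n, (n.choose ij.1 : ℚ) * (NN X σ ij.1 * NN (A \ X) σ ij.2) := by
  classical
  have hd : Disjoint X.offDiag (A \ X).offDiag := by
    rw [disjoint_left]
    intro p hp hq
    rw [mem_offDiag] at hp hq
    exact (mem_sdiff.1 hq.1).2 hp.1
  have hsub : X.offDiag ∪ (A \ X).offDiag ⊆ A.offDiag :=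
    union_subset (offDiag_mono hX) (offDiag_mono sdiff_subset)
  rw [SS_subset A.offDiag _ hsub]
  unfold NN
  rw [← SS_shuffle _ _ hd]
  apply SS_congr
  intro L _ hL
  have h1 : ∀ p ∈ L, p ∈ X.offDiag ∨ (p.1 ∉ X ∧ p.2 ∉ X) := by
    intro p hp
    rcases mem_union.1 (hL p hp) with h | h
    · exact Or.inl h
    · rw [mem_offDiag] at h
      exact Or.inr ⟨(mem_sdiff.1 h.1).2, (mem_sdiff.1 h.2.1).2⟩
  have h2 : ∀ p ∈ L, p ∈ (A \ X).offDiag ∨ (p.1 ∉ A \ X ∧ p.2 ∉ A \ X) := by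
    intro p hp
    rcases mem_union.1 (hL p hp) with h | h
    · rw [mem_offDiag] at h
      exact Or.inr ⟨fun h' => (mem_sdiff.1 h').2 h.1, fun h' => (mem_sdiff.1 h').2 h.2.1⟩
    · exact Or.inl h
  obtain ⟨a1, a2⟩ := filt X L h1
  obtain ⟨b1, b2⟩ := filt (A \ X) L h2
  have key : (Conn X L ∧ Conn (A \ X) L ∧ ∀ x ∈ A, Pr L x = σ x) ↔
      (good X σ (L.filter (· ∈ X.offDiag)) ∧
        good (A \ X) σ (L.filter (· ∈ (A \ X).offDiag))) := by
    constructor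
    · rintro ⟨c1, c2, c3⟩
      refine ⟨⟨fun x hx => ?_, fun x hx y hy => ?_⟩, ⟨fun x hx => ?_, fun x hx y hy => ?_⟩⟩
      · rw [← (a1 x hx).2]; exact c3 x (hX hx)
      · exact (a2 x hx y (c1 x hx y hy)).2
      · rw [← (b1 x hx).2]; exact c3 x (sdiff_subset hx)
      · exact (b2 x hx y (c2 x hx y hy)).2
    · rintro ⟨⟨g1, g2⟩, ⟨g3, g4⟩⟩
      refine ⟨fun x hx y hy => ?_, fun x hx y hy => ?_, fun x hx => ?_⟩
      · exact RR_mono _ L (fun p hp => List.mem_of_mem_filter hp) x y (g2 x hx y hy)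
      · exact RR_mono _ L (fun p hp => List.mem_of_mem_filter hp) x y (g4 x hx y hy)
      · by_cases hxX : x ∈ X
        · rw [(a1 x hxX).2]; exact g1 x hxX
        · have : x ∈ A \ X := mem_sdiff.2 ⟨hx, hxX⟩
          rw [(b1 x this).2]; exact g3 x this
  rw [if_congr key rfl rfl]
  by_cases q1 : good X σ (L.filter (· ∈ X.offDiag)) <;>
    by_cases q2 : good (A \ X) σ (L.filter (· ∈ (A \ X).offDiag)) <;>
    simp only [q1, q2, and_self, and_true, and_false, false_and, if_true, if_false, mul_one, mul_zero,
      zero_mul, not_true, not_false_iff]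

lemma NN_rec (A : Finset α) (σ : Equiv.Perm α) (n : ℕ) :
    NN A σ (n + 1) = ∑ p ∈ A.offDiag, (NN A (Equiv.swap p.1 p.2 * σ) n +
      ∑ X ∈ A.powerset with (p.1 ∈ X ∧ p.2 ∉ X),
        ∑ ij ∈ antidiagonal n, (n.choose ij.1 : ℚ) *
          (NN X (Equiv.swap p.1 p.2 * σ) ij.1 * NN (A \ X) (Equiv.swap p.1 p.2 * σ) ij.2)) := by
  classical
  conv_lhs => unfold NN
  simp only [SS]
  apply sum_congr rfl
  rintro ⟨a, b⟩ hp
  rw [mem_offDiag] at hp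
  obtain ⟨haA, hbA, hab⟩ := hp
  simp only at haA hbA hab ⊢
  set σ' := Equiv.swap a b * σ with hσ'
  rw [sum_congr rfl (fun X hX => (split_count A X (mem_powerset.1 (mem_filter.1 hX).1) σ' n).symm)]
  rw [← SS_sum, NN, ← SS_add]
  apply SS_congr
  intro L _ hL
  have hpr : (∀ x ∈ A, Pr ((a, b) :: L) x = σ x) ↔ (∀ x ∈ A, Pr L x = σ' x) := by
    apply forall₂_congr
    intro x _
    rw [Pr_cons, hσ', Equiv.Perm.mul_apply, Equiv.Perm.mul_apply]
    constructor
    · intro h; rw [← h]; simp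
    · intro h; rw [h]; simp
  by_cases hP : ∀ x ∈ A, Pr L x = σ' x
  swap
  · rw [if_neg (fun h => hP (hpr.1 h.1)), if_neg (fun h => hP h.1)]
    symm
    rw [zero_add]
    apply sum_eq_zero
    intro X _
    simp [hP]
  by_cases hR : RR L a b
  · have e1 : good A σ ((a, b) :: L) ↔ good A σ' L := by
      unfold good
      rw [hpr]
      apply and_congr_right
      intro _
      apply forall₂_congr
      intro x _
      apply forall₂_congr
      intro y _
      constructor
      · rintro (h | ⟨h1, h2⟩ | ⟨h1, h2⟩)
        · exact h
        · exact RR_trans _ h1 (RR_trans _ hR h2)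
        · exact RR_trans _ h1 (RR_trans _ (RR_symm _ hR) h2)
      · exact Or.inl
    rw [if_congr e1 rfl rfl]
    symm
    rw [add_eq_left]
    apply sum_eq_zero
    intro X hX
    rw [mem_filter] at hX
    rw [if_neg]
    intro hl
    have h1 : ∀ p ∈ L, p ∈ X.offDiag ∨ (p.1 ∉ X ∧ p.2 ∉ X) := by
      intro p hp
      rcases mem_union.1 (hl p hp) with h | h
      · exact Or.inl h
      · rw [mem_offDiag] at h
        exact Or.inr ⟨(mem_sdiff.1 h.1).2, (mem_sdiff.1 h.2.1).2⟩
    exact hX.2.2 ((filt X L h1).2 a hX.2.1 b hR).1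
  · rw [if_neg (c := good A σ' L) (fun h => hR (h.2 a haA b hbA)), zero_add]
    set X₀ := A.filter (fun x => RR L a x) with hX₀
    have hcond : ∀ X ∈ A.powerset.filter (fun X => a ∈ X ∧ b ∉ X), X ≠ X₀ → 
        (if (∀ p ∈ L, p ∈ X.offDiag ∪ (A \ X).offDiag) then
      (if (Conn X L ∧ Conn (A \ X) L ∧ ∀ x ∈ A, Pr L x = σ' x) then (1 : ℚ) else 0) else 0) = 0 := by
      intro X hX hne
      rw [mem_filter, mem_powerset] at hX
      by_contra hc
      apply hne
      split_ifs at hc with h1 h2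
      · have h1' : ∀ p ∈ L, p ∈ X.offDiag ∨ (p.1 ∉ X ∧ p.2 ∉ X) := by
          intro p hp
          rcases mem_union.1 (h1 p hp) with h | h
          · exact Or.inl h
          · rw [mem_offDiag] at h
            exact Or.inr ⟨(mem_sdiff.1 h.1).2, (mem_sdiff.1 h.2.1).2⟩
        ext x
        rw [hX₀, mem_filter]
        constructor
        · intro hx
          exact ⟨hX.1 hx, h2.1 a hX.2.1 x hx⟩
        · rintro ⟨_, hx⟩
          exact ((filt X L h1').2 a hX.2.1 x hx).1
      · exact (hc rfl).elim
      · exact (hc rfl).elim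
    rw [sum_eq_single_of_mem X₀ (by
      rw [mem_filter, mem_powerset, hX₀]
      refine ⟨filter_subset _ _, ?_, ?_⟩
      · rw [mem_filter]; exact ⟨haA, RR_refl _ _⟩
      · rw [mem_filter]; exact fun h => hR h.2) hcond]
    have hlet : ∀ p ∈ L, p ∈ X₀.offDiag ∪ (A \ X₀).offDiag := by
      intro p hp
      have hpA := mem_offDiag.1 (hL p hp)
      have hrel := RR_mem L p hp
      rw [mem_union, mem_offDiag, mem_offDiag]
      by_cases h : RR L a p.1
      · left
        refine ⟨mem_filter.2 ⟨hpA.1, h⟩, mem_filter.2 ⟨hpA.2.1, RR_trans _ h hrel⟩, hpA.2.2⟩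
      · right
        refine ⟨mem_sdiff.2 ⟨hpA.1, fun h' => h (mem_filter.1 h').2⟩,
          mem_sdiff.2 ⟨hpA.2.1, fun h' => h (RR_trans _ (mem_filter.1 h').2 (RR_symm _ hrel))⟩,
          hpA.2.2⟩
    rw [if_pos hlet]
    apply if_congr _ rfl rfl
    have hCX : Conn X₀ L := by
      intro x hx y hy
      exact RR_trans _ (RR_symm _ (mem_filter.1 hx).2) (mem_filter.1 hy).2
    constructor
    · rintro ⟨_, hC⟩
      refine ⟨hCX, ?_, hP⟩
      have hb : ∀ x ∈ A \ X₀, RR L b x := by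
        intro x hx
        rw [mem_sdiff] at hx
        have hx2 : ¬ RR L a x := fun h => hx.2 (mem_filter.2 ⟨hx.1, h⟩)
        rcases hC a haA x hx.1 with h | ⟨h1, h2⟩ | ⟨h1, h2⟩
        · exact absurd h hx2
        · exact h2
        · exact absurd h1 hR
      intro x hx y hy
      exact RR_trans _ (RR_symm _ (hb x hx)) (hb y hy)
    · rintro ⟨_, hCY, _⟩
      refine ⟨hpr.2 hP, ?_⟩
      have hb : b ∈ A \ X₀ := mem_sdiff.2 ⟨hbA, fun h => hR (mem_filter.1 h).2⟩
      have hall : ∀ x ∈ A, RR ((a, b) :: L) a x := by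
        intro x hx
        by_cases h : RR L a x
        · exact Or.inl h
        · exact Or.inr (Or.inl ⟨RR_refl _ _, hCY b hb x
            (mem_sdiff.2 ⟨hx, fun h' => h (mem_filter.1 h').2⟩)⟩)
      intro x hx y hy
      exact RR_trans _ (RR_symm _ (hall x hx)) (hall y hy)

end
end Hurw

namespace Hurw
open Finset
set_option linter.unusedSectionVars false

section
variable {α : Type*} [DecidableEq α] [Fintype α]

open Classical in
/-- The cycle of `σ` containing `x` (including fixed points). -/
noncomputable def cyc (σ : Equiv.Perm α) (x : α) : Finset α := univ.filter (fun y => σ.SameCycle x y)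

lemma mem_cyc {σ : Equiv.Perm α} {x y : α} : y ∈ cyc σ x ↔ σ.SameCycle x y := by
  simp [cyc]

lemma cyc_self (σ : Equiv.Perm α) (x : α) : x ∈ cyc σ x := mem_cyc.2 (Equiv.Perm.SameCycle.refl _ _)

lemma cyc_eq_iff {σ : Equiv.Perm α} {x y : α} : cyc σ x = cyc σ y ↔ σ.SameCycle x y := by
  constructor
  · intro h
    have := cyc_self σ y
    rw [← h] at this
    exact mem_cyc.1 this
  · intro h
    ext z
    rw [mem_cyc, mem_cyc]
    exact ⟨fun h' => h.symm.trans h', fun h' => h.trans h'⟩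

lemma sc_pow {σ : Equiv.Perm α} {x y : α} : σ.SameCycle x y ↔ ∃ j : ℕ, (σ ^ j) x = y := by
  constructor
  · intro h
    obtain ⟨i, _, h⟩ := h.exists_pow_eq'
    exact ⟨i, h⟩
  · rintro ⟨j, rfl⟩
    exact ⟨j, by simp⟩

lemma sc_lt {σ : Equiv.Perm α} {x : α} {n : ℕ} (hn : 0 < n) (h : (σ ^ n) x = x) (y : α) :
    σ.SameCycle x y ↔ ∃ j < n, (σ ^ j) x = y := by
  rw [sc_pow]
  constructor
  · rintro ⟨j, rfl⟩
    refine ⟨j % n, Nat.mod_lt _ hn, ?_⟩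
    have hp : ∀ q : ℕ, (σ ^ (n * q)) x = x := by
      intro q
      induction q with
      | zero => simp
      | succ q ih => rw [Nat.mul_succ, pow_add, Equiv.Perm.mul_apply, h, ih]
    conv_rhs => rw [← Nat.mod_add_div j n, pow_add, Equiv.Perm.mul_apply, hp]
  · rintro ⟨j, _, h⟩
    exact ⟨j, h⟩

lemma exists_period (σ : Equiv.Perm α) (a : α) : ∃ d : ℕ, 0 < d ∧ (σ ^ d) a = a ∧
    ∀ i < d, ∀ j < d, (σ ^ i) a = (σ ^ j) a → i = j := by
  have hp : a ∈ Function.periodicPts σ := by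
    refine ⟨orderOf σ, orderOf_pos σ, ?_⟩
    unfold Function.IsPeriodicPt Function.IsFixedPt
    rw [← Equiv.Perm.coe_pow, pow_orderOf_eq_one]; rfl
  refine ⟨Function.minimalPeriod σ a, Function.minimalPeriod_pos_of_mem_periodicPts hp, ?_, ?_⟩
  · rw [Equiv.Perm.coe_pow]; exact Function.iterate_minimalPeriod
  · intro i hi j hj h
    rw [Equiv.Perm.coe_pow, Equiv.Perm.coe_pow] at h
    exact Function.iterate_injOn_Iio_minimalPeriod hi hj h

lemma powsucc (σ : Equiv.Perm α) (j : ℕ) (x : α) : (σ ^ (j + 1)) x = σ ((σ ^ j) x) := by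
  rw [pow_succ']; rfl

lemma cyc_away (σ : Equiv.Perm α) (a b x : α) (ha : ¬ σ.SameCycle a x) (hb : ¬ σ.SameCycle b x) :
    cyc (Equiv.swap a b * σ) x = cyc σ x := by
  have key : ∀ j : ℕ, ((Equiv.swap a b * σ) ^ j) x = (σ ^ j) x := by
    intro j
    induction j with
    | zero => rfl
    | succ j ih =>
      rw [powsucc, ih, Equiv.Perm.mul_apply, ← powsucc]
      apply Equiv.swap_apply_of_ne_of_ne
      · intro h; exact ha (sc_pow.2 ⟨_, h⟩).symm
      · intro h; exact hb (sc_pow.2 ⟨_, h⟩).symm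
  ext y
  rw [mem_cyc, mem_cyc, sc_pow, sc_pow]
  simp only [key]

lemma join_sc (σ : Equiv.Perm α) (a b : α) (h : ¬ σ.SameCycle a b) :
    (Equiv.swap a b * σ).SameCycle a b := by
  obtain ⟨d, hd, hda, hinj⟩ := exists_period σ a
  have key : ∀ j < d, ((Equiv.swap a b * σ) ^ j) a = (σ ^ j) a := by
    intro j
    induction j with
    | zero => intro _; rfl
    | succ j ih =>
      intro hj
      rw [powsucc, ih (by omega), Equiv.Perm.mul_apply, ← powsucc]
      apply Equiv.swap_apply_of_ne_of_ne
      · intro h'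
        have := hinj (j + 1) hj 0 hd (by simpa using h')
        omega
      · intro h'; exact h (sc_pow.2 ⟨_, h'⟩)
  rw [sc_pow]
  refine ⟨d, ?_⟩
  obtain ⟨e, rfl⟩ : ∃ e, d = e + 1 := ⟨d - 1, by omega⟩
  rw [powsucc, key e (by omega), Equiv.Perm.mul_apply, ← powsucc, hda, Equiv.swap_apply_left]

/-- Explicit description of the two cycles obtained by cutting. -/
lemma cut_desc (σ : Equiv.Perm α) (a : α) (d : ℕ) (hda : (σ ^ d) a = a)
    (hinj : ∀ i < d, ∀ j < d, (σ ^ i) a = (σ ^ j) a → i = j) (i : ℕ) (hi : 0 < i) (hid : i < d) :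
    (∀ y, (Equiv.swap a ((σ ^ i) a) * σ).SameCycle a y ↔ ∃ j < i, (σ ^ j) a = y) ∧
    (∀ y, (Equiv.swap a ((σ ^ i) a) * σ).SameCycle ((σ ^ i) a) y ↔
      ∃ j < d - i, (σ ^ (i + j)) a = y) := by
  set b := (σ ^ i) a with hb
  have ne_a : ∀ j, 0 < j → j < d → (σ ^ j) a ≠ a := by
    intro j h0 hj h'
    have := hinj j hj 0 (by omega) (by simpa using h')
    omega
  have ne_b : ∀ j, j ≠ i → j < d → (σ ^ j) a ≠ b := by
    intro j h0 hj h'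
    exact h0 (hinj j hj i hid h')
  have k1 : ∀ j < i, ((Equiv.swap a b * σ) ^ j) a = (σ ^ j) a := by
    intro j
    induction j with
    | zero => intro _; rfl
    | succ j ih =>
      intro hj
      rw [powsucc, ih (by omega), Equiv.Perm.mul_apply, ← powsucc]
      exact Equiv.swap_apply_of_ne_of_ne (ne_a _ (by omega) (by omega)) (ne_b _ (by omega) (by omega))
  have k1' : ((Equiv.swap a b * σ) ^ i) a = a := by
    obtain ⟨e, he⟩ : ∃ e, i = e + 1 := ⟨i - 1, by omega⟩
    rw [he, powsucc, k1 e (by omega), Equiv.Perm.mul_apply, ← powsucc, ← he, ← hb,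
      Equiv.swap_apply_right]
  have k2 : ∀ j < d - i, ((Equiv.swap a b * σ) ^ j) b = (σ ^ (i + j)) a := by
    intro j
    induction j with
    | zero => intro _; rfl
    | succ j ih =>
      intro hj
      rw [powsucc, ih (by omega), Equiv.Perm.mul_apply, ← powsucc]
      exact Equiv.swap_apply_of_ne_of_ne (ne_a _ (by omega) (by omega)) (ne_b _ (by omega) (by omega))
  have k2' : ((Equiv.swap a b * σ) ^ (d - i)) b = b := by
    obtain ⟨e, he⟩ : ∃ e, d - i = e + 1 := ⟨d - i - 1, by omega⟩
    rw [he, powsucc, k2 e (by omega), Equiv.Perm.mul_apply, ← powsucc,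
      show i + e + 1 = d by omega, hda, Equiv.swap_apply_left]
  refine ⟨fun y => ?_, fun y => ?_⟩
  · rw [sc_lt hi k1']
    constructor
    · rintro ⟨j, hj, h⟩; exact ⟨j, hj, by rw [← k1 j hj]; exact h⟩
    · rintro ⟨j, hj, h⟩; exact ⟨j, hj, by rw [k1 j hj]; exact h⟩
  · rw [sc_lt (by omega) k2']
    constructor
    · rintro ⟨j, hj, h⟩; exact ⟨j, hj, by rw [← k2 j hj]; exact h⟩
    · rintro ⟨j, hj, h⟩; exact ⟨j, hj, by rw [k2 j hj]; exact h⟩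

lemma cut_sets (σ : Equiv.Perm α) (a b : α) (hab : a ≠ b) (h : σ.SameCycle a b) :
    (¬ (Equiv.swap a b * σ).SameCycle a b) ∧
    cyc σ a = cyc (Equiv.swap a b * σ) a ∪ cyc (Equiv.swap a b * σ) b := by
  obtain ⟨d, hd, hda, hinj⟩ := exists_period σ a
  obtain ⟨i, hid, rfl⟩ := (sc_lt hd hda b).1 h
  have hi : 0 < i := by
    rcases Nat.eq_zero_or_pos i with rfl | h
    · exact absurd rfl hab
    · exact h
  obtain ⟨h1, h2⟩ := cut_desc σ a d hda hinj i hi hid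
  constructor
  · rw [h1]
    rintro ⟨j, hj, h'⟩
    have := hinj j (by omega) i hid h'
    omega
  · ext y
    rw [mem_union, mem_cyc, mem_cyc, mem_cyc, h1, h2, sc_lt hd hda]
    constructor
    · rintro ⟨j, hj, rfl⟩
      by_cases hji : j < i
      · exact Or.inl ⟨j, hji, rfl⟩
      · exact Or.inr ⟨j - i, by omega, by rw [show i + (j - i) = j by omega]⟩
    · rintro (⟨j, hj, rfl⟩ | ⟨j, hj, rfl⟩)
      · exact ⟨j, by omega, rfl⟩
      · exact ⟨i + j, by omega, rfl⟩

lemma cut_disj (σ : Equiv.Perm α) (a b : α) (h : ¬ σ.SameCycle a b) :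
    Disjoint (cyc σ a) (cyc σ b) := by
  rw [disjoint_left]
  intro x hx hy
  exact h ((mem_cyc.1 hx).trans (mem_cyc.1 hy).symm)

lemma cut_count (σ : Equiv.Perm α) (a : α) (F : ℕ → ℚ) :
    ∑ b ∈ (cyc σ a).erase a, F (cyc (Equiv.swap a b * σ) a).card =
      ∑ r ∈ Ico 1 (cyc σ a).card, F r := by
  obtain ⟨d, hd, hda, hinj⟩ := exists_period σ a
  have e1 : cyc σ a = (range d).image (fun j => (σ ^ j) a) := by
    ext y
    rw [mem_cyc, sc_lt hd hda]
    simp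
  have c1 : (cyc σ a).card = d := by
    rw [e1, card_image_of_injOn, card_range]
    intro i hi j hj h
    simp only [coe_range, Set.mem_Iio] at hi hj
    exact hinj i hi j hj h
  rw [c1]
  symm
  apply sum_bij (fun i _ => (σ ^ i) a)
  · intro i hi
    rw [mem_Ico] at hi
    rw [mem_erase]
    refine ⟨?_, mem_cyc.2 (sc_pow.2 ⟨i, rfl⟩)⟩
    intro h'
    have := hinj i hi.2 0 hd (by simpa using h')
    omega
  · intro i hi j hj h
    rw [mem_Ico] at hi hj
    exact hinj i hi.2 j hj.2 h
  · intro b hb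
    rw [mem_erase, mem_cyc, sc_lt hd hda] at hb
    obtain ⟨h1, j, hj, rfl⟩ := hb
    refine ⟨j, ?_, rfl⟩
    rw [mem_Ico]
    refine ⟨?_, hj⟩
    rcases Nat.eq_zero_or_pos j with rfl | h
    · exact absurd rfl h1
    · exact h
  · intro i hi
    rw [mem_Ico] at hi
    obtain ⟨h1, _⟩ := cut_desc σ a d hda hinj i hi.1 hi.2
    congr 1
    have : cyc (Equiv.swap a ((σ ^ i) a) * σ) a = (range i).image (fun j => (σ ^ j) a) := by
      ext y
      rw [mem_cyc, h1]
      simp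
    rw [this, card_image_of_injOn, card_range]
    intro p hp q hq h
    simp only [coe_range, Set.mem_Iio] at hp hq
    exact hinj p (by omega) q (by omega) h

end
end Hurw

namespace Hurw
open Finset
set_option linter.unusedSectionVars false

section
variable {α : Type*} [DecidableEq α] [Fintype α]

/-- The set of cycles of `σ` meeting `A`. -/
noncomputable def CC (A : Finset α) (σ : Equiv.Perm α) : Finset (Finset α) := A.image (cyc σ)

lemma inv_cyc {A : Finset α} {σ : Equiv.Perm α} (h : ∀ x ∈ A, σ x ∈ A) {x : α} (hx : x ∈ A) :
    cyc σ x ⊆ A := by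
  intro y hy
  obtain ⟨j, rfl⟩ := sc_pow.1 (mem_cyc.1 hy)
  induction j with
  | zero => exact hx
  | succ j ih =>
    rw [powsucc]
    exact h _ (ih (mem_cyc.2 (sc_pow.2 ⟨j, rfl⟩)))

lemma cyc_of_mem {σ : Equiv.Perm α} {x y : α} (h : y ∈ cyc σ x) : cyc σ y = cyc σ x :=
  cyc_eq_iff.2 (mem_cyc.1 h).symm

lemma CC_eq_cyc {A : Finset α} {σ : Equiv.Perm α} {c : Finset α} (hc : c ∈ CC A σ) {y : α}
    (hy : y ∈ c) : cyc σ y = c := by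
  obtain ⟨x, _, rfl⟩ := mem_image.1 hc
  exact cyc_of_mem hy

lemma CC_nonempty {A : Finset α} {σ : Equiv.Perm α} {c : Finset α} (hc : c ∈ CC A σ) :
    c.Nonempty := by
  obtain ⟨x, _, rfl⟩ := mem_image.1 hc
  exact ⟨x, cyc_self σ x⟩

lemma inv_biUnion {B : Finset α} {σ : Equiv.Perm α} {D : Finset (Finset α)} (hD : D ⊆ CC B σ) :
    ∀ x ∈ D.biUnion id, σ x ∈ D.biUnion id := by
  intro x hx
  rw [mem_biUnion] at hx ⊢
  obtain ⟨c, hc, hxc⟩ := hx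
  refine ⟨c, hc, ?_⟩
  simp only [id] at hxc ⊢
  rw [← CC_eq_cyc (hD hc) hxc, mem_cyc, sc_pow]
  exact ⟨1, by simp⟩

lemma CC_biUnion {B : Finset α} {σ : Equiv.Perm α} {D : Finset (Finset α)} (hD : D ⊆ CC B σ) :
    CC (D.biUnion id) σ = D := by
  ext c
  unfold CC
  rw [mem_image]
  constructor
  · rintro ⟨x, hx, rfl⟩
    rw [mem_biUnion] at hx
    obtain ⟨c, hc, hxc⟩ := hx
    rwa [CC_eq_cyc (hD hc) hxc]
  · intro hc
    obtain ⟨x, hx⟩ := CC_nonempty (hD hc)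
    exact ⟨x, mem_biUnion.2 ⟨c, hc, hx⟩, CC_eq_cyc (hD hc) hx⟩

lemma biUnion_CC {A : Finset α} {σ : Equiv.Perm α} (h : ∀ x ∈ A, σ x ∈ A) :
    (CC A σ).biUnion id = A := by
  ext x
  rw [mem_biUnion]
  constructor
  · rintro ⟨c, hc, hx⟩
    obtain ⟨y, hy, rfl⟩ := mem_image.1 hc
    exact inv_cyc h hy hx
  · intro hx
    exact ⟨cyc σ x, mem_image_of_mem _ hx, cyc_self σ x⟩

lemma CC_disj (A : Finset α) (σ : Equiv.Perm α) :
    (CC A σ : Set (Finset α)).PairwiseDisjoint id := by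
  intro c hc e he hne
  rw [Function.onFun, disjoint_left]
  intro x hx hx'
  exact hne ((CC_eq_cyc hc hx).symm.trans (CC_eq_cyc he hx'))

lemma sum_CC {A : Finset α} {σ : Equiv.Perm α} (h : ∀ x ∈ A, σ x ∈ A) (g : Finset α → ℚ) :
    ∑ x ∈ A, g (cyc σ x) = ∑ c ∈ CC A σ, (c.card : ℚ) * g c := by
  conv_lhs => rw [← biUnion_CC h]
  rw [sum_biUnion (CC_disj A σ)]
  apply sum_congr rfl
  intro c hc
  rw [sum_congr rfl (g := fun _ => g c) (fun x hx => by rw [CC_eq_cyc hc hx])]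
  simp

lemma card_CC {B : Finset α} {σ : Equiv.Perm α} {D : Finset (Finset α)} (hD : D ⊆ CC B σ) :
    (D.biUnion id).card = ∑ c ∈ D, c.card :=
  card_biUnion (fun c hc e he hne => CC_disj B σ (hD hc) (hD he) hne)

lemma card_CC' {A : Finset α} {σ : Equiv.Perm α} (h : ∀ x ∈ A, σ x ∈ A) :
    A.card = ∑ c ∈ CC A σ, c.card := by
  conv_lhs => rw [← biUnion_CC h]
  exact card_CC (Subset.refl _)

lemma sdiff_biUnion {A : Finset α} {σ : Equiv.Perm α} (h : ∀ x ∈ A, σ x ∈ A)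
    {D : Finset (Finset α)} (hD : D ⊆ CC A σ) :
    A \ D.biUnion id = (CC A σ \ D).biUnion id := by
  ext x
  rw [mem_sdiff, mem_biUnion, mem_biUnion]
  constructor
  · rintro ⟨hx, hn⟩
    refine ⟨cyc σ x, mem_sdiff.2 ⟨mem_image_of_mem _ hx, fun h' => hn ⟨_, h', cyc_self σ x⟩⟩,
      cyc_self σ x⟩
  · rintro ⟨c, hc, hx⟩
    rw [mem_sdiff] at hc
    refine ⟨?_, ?_⟩
    · rw [← biUnion_CC h]; exact mem_biUnion.2 ⟨c, hc.1, hx⟩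
    · rintro ⟨e, he, hxe⟩
      have : c = e := (CC_eq_cyc hc.1 hx).symm.trans (CC_eq_cyc (hD he) hxe)
      exact hc.2 (this ▸ he)

lemma inv_swap {A : Finset α} {σ : Equiv.Perm α} (h : ∀ x ∈ A, σ x ∈ A) {a b : α} (ha : a ∈ A)
    (hb : b ∈ A) : ∀ x ∈ A, (Equiv.swap a b * σ) x ∈ A := by
  intro x hx
  rw [Equiv.Perm.mul_apply, Equiv.swap_apply_def]
  split_ifs
  · exact hb
  · exact ha
  · exact h x hx

/-- Cycles after a cut. -/
lemma CC_cut {A : Finset α} {σ : Equiv.Perm α} (hA : ∀ x ∈ A, σ x ∈ A) {a b : α} (ha : a ∈ A)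
    (hb : b ∈ A) (hab : a ≠ b) (h : σ.SameCycle a b) :
    CC A (Equiv.swap a b * σ) = insert (cyc (Equiv.swap a b * σ) a)
      (insert (cyc (Equiv.swap a b * σ) b) ((CC A σ).erase (cyc σ a))) := by
  obtain ⟨h1, h2⟩ := cut_sets σ a b hab h
  ext e
  rw [mem_insert, mem_insert, mem_erase]
  constructor
  · intro he
    obtain ⟨x, hx, rfl⟩ := mem_image.1 he
    by_cases hxc : x ∈ cyc σ a
    · rw [h2, mem_union] at hxc
      rcases hxc with hx' | hx'
      · left; exact cyc_of_mem hx'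
      · right; left; exact cyc_of_mem hx'
    · right; right
      have ha' : ¬ σ.SameCycle a x := fun h' => hxc (mem_cyc.2 h')
      have hb' : ¬ σ.SameCycle b x := fun h' => hxc (mem_cyc.2 (h.trans h'))
      rw [cyc_away σ a b x ha' hb']
      exact ⟨fun h' => ha' (cyc_eq_iff.1 h').symm, mem_image_of_mem _ hx⟩
  · rintro (rfl | rfl | ⟨hne, he⟩)
    · exact mem_image_of_mem _ ha
    · exact mem_image_of_mem _ hb
    · obtain ⟨x, hx, rfl⟩ := mem_image.1 he
      have ha' : ¬ σ.SameCycle a x := fun h' => hne (cyc_eq_iff.2 h'.symm)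
      have hb' : ¬ σ.SameCycle b x := fun h' => hne (cyc_eq_iff.2 (h.trans h').symm)
      rw [← cyc_away σ a b x ha' hb']
      exact mem_image_of_mem _ hx

lemma cut_notin {A : Finset α} {σ : Equiv.Perm α} {a b : α}
    (hab : a ≠ b) (h : σ.SameCycle a b) :
    cyc (Equiv.swap a b * σ) a ≠ cyc (Equiv.swap a b * σ) b ∧
    cyc (Equiv.swap a b * σ) a ∉ (CC A σ).erase (cyc σ a) ∧
    cyc (Equiv.swap a b * σ) b ∉ (CC A σ).erase (cyc σ a) ∧
    (cyc (Equiv.swap a b * σ) a).card + (cyc (Equiv.swap a b * σ) b).card = (cyc σ a).card := by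
  obtain ⟨h1, h2⟩ := cut_sets σ a b hab h
  refine ⟨fun h' => h1 (cyc_eq_iff.1 h'), fun h' => ?_, fun h' => ?_, ?_⟩
  · rw [mem_erase] at h'
    exact h'.1 (CC_eq_cyc h'.2 (cyc_self _ a)).symm
  · rw [mem_erase] at h'
    exact h'.1 ((CC_eq_cyc h'.2 (cyc_self _ b)).symm.trans (cyc_eq_iff.2 h.symm))
  · rw [h2, card_union_of_disjoint (cut_disj _ a b h1)]

lemma swap_swap_mul (σ : Equiv.Perm α) (a b : α) :
    Equiv.swap a b * (Equiv.swap a b * σ) = σ := by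
  rw [← mul_assoc, Equiv.swap_mul_self, one_mul]

/-- Cycles after a join. -/
lemma CC_join {A : Finset α} {σ : Equiv.Perm α} (hA : ∀ x ∈ A, σ x ∈ A) {a b : α} (ha : a ∈ A)
    (hb : b ∈ A) (hab : a ≠ b) (h : ¬ σ.SameCycle a b) :
    (CC A (Equiv.swap a b * σ)) = insert (cyc σ a ∪ cyc σ b)
      (((CC A σ).erase (cyc σ a)).erase (cyc σ b)) ∧
    (cyc σ a ∪ cyc σ b) ∉ (((CC A σ).erase (cyc σ a)).erase (cyc σ b)) ∧
    (cyc σ a ∪ cyc σ b).card = (cyc σ a).card + (cyc σ b).card := by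
  have hs := join_sc σ a b h
  have hA' := inv_swap hA ha hb
  have h1 := CC_cut hA' ha hb hab hs
  obtain ⟨n1, n2, n3, n4⟩ := cut_notin (A := A) hab hs
  have h2 := (cut_sets _ a b hab hs).2
  rw [swap_swap_mul] at h1 n1 n2 n3 n4 h2
  have e : ((CC A σ).erase (cyc σ a)).erase (cyc σ b) =
      (CC A (Equiv.swap a b * σ)).erase (cyc (Equiv.swap a b * σ) a) := by
    rw [h1, erase_insert, erase_insert n3]
    rw [mem_insert]
    rintro (h' | h')
    · exact n1 h'
    · exact n2 h'
  rw [e, ← h2]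
  refine ⟨?_, notMem_erase _ _, n4.symm⟩
  rw [insert_erase]
  exact mem_image_of_mem _ ha

end
end Hurw

namespace Hurw
open Finset
set_option linter.unusedSectionVars false

section
variable {α : Type*} [DecidableEq α] [Fintype α]

/-- The inductive claim. -/
def Claim (α : Type*) [DecidableEq α] [Fintype α] (n : ℕ) : Prop :=
  ∀ (A : Finset α) (σ : Equiv.Perm α), A.Nonempty → (∀ x ∈ A, σ x ∈ A) →
    (n + 2 < A.card + (CC A σ).card → NN A σ n = 0) ∧
    (n + 2 = A.card + (CC A σ).card → NN A σ n =
      2 ^ n * (n.factorial : ℚ) * ((A.card : ℚ) ^ (((CC A σ).card : ℤ) - 3) *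
        ∏ c ∈ CC A σ, ff c.card))

/-- The summand in the recursion. -/
noncomputable def TT (A : Finset α) (σ : Equiv.Perm α) (n : ℕ) (a b : α) : ℚ :=
  NN A (Equiv.swap a b * σ) n +
      ∑ X ∈ A.powerset with (a ∈ X ∧ b ∉ X),
        ∑ ij ∈ antidiagonal n, (n.choose ij.1 : ℚ) *
          (NN X (Equiv.swap a b * σ) ij.1 * NN (A \ X) (Equiv.swap a b * σ) ij.2)

lemma TT_join_eq (A : Finset α) (σ : Equiv.Perm α) (n : ℕ) (a b : α)
    (h : ¬ σ.SameCycle a b) : TT A σ n a b = NN A (Equiv.swap a b * σ) n := by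
  unfold TT
  rw [add_eq_left]
  apply sum_eq_zero
  intro X hX
  apply sum_eq_zero
  intro ij _
  rw [mem_filter] at hX
  by_cases h0 : NN X (Equiv.swap a b * σ) ij.1 = 0
  · rw [h0]; ring
  · exact absurd (inv_cyc (NN_inv _ _ _ h0) hX.2.1 (mem_cyc.2 (join_sc σ a b h))) hX.2.2

lemma TT_join {n : ℕ} (hn : Claim α n) {A : Finset α} {σ : Equiv.Perm α}
    (hA : ∀ x ∈ A, σ x ∈ A) {a b : α} (ha : a ∈ A) (hb : b ∈ A) (hab : a ≠ b)
    (h : ¬ σ.SameCycle a b) :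
    (n + 3 < A.card + (CC A σ).card → TT A σ n a b = 0) ∧
    (n + 3 = A.card + (CC A σ).card → TT A σ n a b = 2 ^ n * (n.factorial : ℚ) *
      ((A.card : ℚ) ^ (((CC A σ).card : ℤ) - 4) * (ff ((cyc σ a).card + (cyc σ b).card) *
        ∏ c ∈ ((CC A σ).erase (cyc σ a)).erase (cyc σ b), ff c.card))) := by
  rw [TT_join_eq A σ n a b h]
  obtain ⟨h1, h2, h3⟩ := CC_join hA ha hb hab h
  have hcard : (CC A (Equiv.swap a b * σ)).card + 1 = (CC A σ).card := by
    rw [h1, card_insert_of_notMem h2, card_erase_add_one, card_erase_add_one]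
    · exact mem_image_of_mem _ ha
    · rw [mem_erase]
      exact ⟨fun h' => h (cyc_eq_iff.1 h').symm, mem_image_of_mem _ hb⟩
  obtain ⟨c1, c2⟩ := hn A (Equiv.swap a b * σ) ⟨a, ha⟩ (inv_swap hA ha hb)
  refine ⟨fun hh => c1 (by omega), fun hh => ?_⟩
  rw [c2 (by omega), h1, prod_insert h2, h3, ← h1, ← hcard]
  congr 3
  push_cast
  ring

lemma cut_term {n : ℕ} (hn : ∀ i ≤ n, Claim α i) {X Y : Finset α} {τ : Equiv.Perm α}
    (hX : ∀ x ∈ X, τ x ∈ X) (hY : ∀ x ∈ Y, τ x ∈ Y) (hXn : X.Nonempty) (hYn : Y.Nonempty) :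
    (n + 4 < (X.card + Y.card) + ((CC X τ).card + (CC Y τ).card) →
      ∑ ij ∈ antidiagonal n, (n.choose ij.1 : ℚ) * (NN X τ ij.1 * NN Y τ ij.2) = 0) ∧
    (n + 4 = (X.card + Y.card) + ((CC X τ).card + (CC Y τ).card) →
      ∑ ij ∈ antidiagonal n, (n.choose ij.1 : ℚ) * (NN X τ ij.1 * NN Y τ ij.2) =
        2 ^ n * (n.factorial : ℚ) * (((X.card : ℚ) ^ (((CC X τ).card : ℤ) - 3) *
        ∏ c ∈ CC X τ, ff c.card) * ((Y.card : ℚ) ^ (((CC Y τ).card : ℤ) - 3) *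
        ∏ c ∈ CC Y τ, ff c.card))) := by
  have px : 1 ≤ X.card := hXn.card_pos
  have py : 1 ≤ Y.card := hYn.card_pos
  have qx : 1 ≤ (CC X τ).card := (hXn.image _).card_pos
  have qy : 1 ≤ (CC Y τ).card := (hYn.image _).card_pos
  have zero : ∀ ij ∈ antidiagonal n, ij.1 + 2 < X.card + (CC X τ).card ∨
      ij.2 + 2 < Y.card + (CC Y τ).card →
      (n.choose ij.1 : ℚ) * (NN X τ ij.1 * NN Y τ ij.2) = 0 := by
    rintro ⟨i, j⟩ hij h
    rw [HasAntidiagonal.mem_antidiagonal] at hij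
    simp only at hij h ⊢
    rcases h with h | h
    · rw [(hn i (by omega) X τ hXn hX).1 h]; ring
    · rw [(hn j (by omega) Y τ hYn hY).1 h]; ring
  constructor
  · intro h
    apply sum_eq_zero
    intro ij hij
    apply zero ij hij
    rw [HasAntidiagonal.mem_antidiagonal] at hij
    omega
  · intro h
    set p := X.card + (CC X τ).card - 2 with hp
    set q := Y.card + (CC Y τ).card - 2 with hq
    have hpq : p + q = n := by omega
    rw [sum_eq_single_of_mem (p, q) (HasAntidiagonal.mem_antidiagonal.2 hpq)]
    · simp only
      rw [(hn p (by omega) X τ hXn hX).2 (by omega), (hn q (by omega) Y τ hYn hY).2 (by omega)]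
      have hf : (n.choose p : ℚ) * (p.factorial : ℚ) * (q.factorial : ℚ) = n.factorial := by
        rw [← hpq]
        rw [Nat.choose_symm_add]
        exact_mod_cast Nat.add_choose_mul_factorial_mul_factorial p q
      rw [← hf, ← hpq, pow_add]
      ring
    · rintro ⟨i, j⟩ hij hne
      apply zero _ hij
      rw [HasAntidiagonal.mem_antidiagonal] at hij
      simp only at hij ⊢
      by_contra hc
      push Not at hc
      apply hne
      rw [Prod.mk.injEq]
      omega

lemma TT_cut {n : ℕ} (hn : ∀ i ≤ n, Claim α i) {A : Finset α} {σ : Equiv.Perm α}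
    (hA : ∀ x ∈ A, σ x ∈ A) {a b : α} (ha : a ∈ A) (hb : b ∈ A) (hab : a ≠ b)
    (h : σ.SameCycle a b) :
    (n + 3 < A.card + (CC A σ).card → TT A σ n a b = 0) ∧
    (n + 3 = A.card + (CC A σ).card → TT A σ n a b = 2 ^ n * (n.factorial : ℚ) *
      (ff (cyc (Equiv.swap a b * σ) a).card *
        ff ((cyc σ a).card - (cyc (Equiv.swap a b * σ) a).card) *
        (∏ c ∈ (CC A σ).erase (cyc σ a), ff c.card) *
        BB Finset.card ((CC A σ).erase (cyc σ a)) (cyc (Equiv.swap a b * σ) a).card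
          ((cyc σ a).card - (cyc (Equiv.swap a b * σ) a).card))) := by
  obtain ⟨n1, n2, n3, n4⟩ := cut_notin (A := A) hab h
  have hCC := CC_cut hA ha hb hab h
  have hτ := inv_swap hA ha hb
  set τ := Equiv.swap a b * σ with hτdef
  set J := (CC A σ).erase (cyc σ a) with hJ
  set c' := cyc τ a with hc'
  set c'' := cyc τ b with hc''
  have hk : J.card + 1 = (CC A σ).card := card_erase_add_one (mem_image_of_mem _ ha)
  have hk' : (CC A τ).card = J.card + 2 := by
    rw [hCC, card_insert_of_notMem, card_insert_of_notMem n3]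
    rw [mem_insert]
    rintro (h' | h')
    · exact n1 h'
    · exact n2 h'
  have hJs : ∀ S ∈ J.powerset, insert c' S ⊆ CC A τ := by
    intro S hS
    rw [hCC]
    apply insert_subset_insert
    exact (mem_powerset.1 hS).trans (subset_insert _ _)
  have hcompl : ∀ S ∈ J.powerset, CC A τ \ insert c' S = insert c'' (J \ S) := by
    intro S hS
    have hS' := mem_powerset.1 hS
    rw [hCC]
    ext e
    simp only [mem_sdiff, mem_insert, not_or]
    constructor
    · rintro ⟨h1 | h1 | h1, h2, h3⟩
      · exact absurd h1 h2
      · exact Or.inl h1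
      · exact Or.inr ⟨h1, h3⟩
    · rintro (h1 | ⟨h1, h2⟩)
      · subst h1
        exact ⟨Or.inr (Or.inl rfl), n1.symm, fun h' => n3 (hS' h')⟩
      · exact ⟨Or.inr (Or.inr h1), fun h' => n2 (h' ▸ h1), h2⟩
  -- the term for the subset given by `S`
  set G : Finset α → ℚ := fun X => ∑ ij ∈ antidiagonal n, (n.choose ij.1 : ℚ) *
          (NN X τ ij.1 * NN (A \ X) τ ij.2) with hG
  have hsum : ∑ X ∈ A.powerset with (a ∈ X ∧ b ∉ X), G X =
      ∑ S ∈ J.powerset, G ((insert c' S).biUnion id) := by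
    symm
    apply sum_of_injOn (fun S => (insert c' S).biUnion id)
    · intro S hS T hT hST
      have e1 := CC_biUnion (hJs S hS)
      have e2 := CC_biUnion (hJs T hT)
      simp only at hST
      rw [hST, e2] at e1
      have s1 : c' ∉ S := fun h' => n2 (mem_powerset.1 hS h')
      have s2 : c' ∉ T := fun h' => n2 (mem_powerset.1 hT h')
      rw [← erase_insert s1, ← erase_insert s2, e1]
    · intro S hS
      simp only [coe_filter, Set.mem_ofPred_eq, mem_powerset]
      refine ⟨?_, ?_, ?_⟩
      · conv_rhs => rw [← biUnion_CC hτ]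
        exact biUnion_subset_biUnion_of_subset_left _ (hJs S hS)
      · exact mem_biUnion.2 ⟨c', mem_insert_self _ _, cyc_self τ a⟩
      · intro hb'
        have : b ∈ A \ (insert c' S).biUnion id := by
          rw [sdiff_biUnion hτ (hJs S hS), hcompl S hS]
          exact mem_biUnion.2 ⟨c'', mem_insert_self _ _, cyc_self τ b⟩
        exact (mem_sdiff.1 this).2 hb'
    · intro X hX hXn
      rw [mem_filter, mem_powerset] at hX
      by_contra hne
      apply hXn
      have hXinv : ∀ x ∈ X, τ x ∈ X := by
        obtain ⟨ij, _, hij⟩ := exists_ne_zero_of_sum_ne_zero hne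
        apply NN_inv X τ ij.1
        intro h0
        apply hij
        rw [h0]; ring
      refine ⟨(CC X τ).erase c', ?_, ?_⟩
      · rw [mem_coe, mem_powerset]
        intro e he
        rw [mem_erase] at he
        have h1 : e ∈ CC A τ := image_subset_image hX.1 he.2
        rw [hCC, mem_insert, mem_insert] at h1
        rcases h1 with h1 | h1 | h1
        · exact absurd h1 he.1
        · exfalso
          apply hX.2.2
          rw [← biUnion_CC hXinv]
          exact mem_biUnion.2 ⟨e, he.2, by rw [h1]; exact cyc_self τ b⟩
        · exact h1
      · simp only
        have hm : c' ∈ CC X τ := mem_image_of_mem _ hX.2.1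
        rw [insert_erase hm, biUnion_CC hXinv]
    · intro S _; rfl
  have hdata : ∀ S ∈ J.powerset, 
      (n + 3 < A.card + (CC A σ).card → G ((insert c' S).biUnion id) = 0) ∧
      (n + 3 = A.card + (CC A σ).card → G ((insert c' S).biUnion id) =
        2 ^ n * (n.factorial : ℚ) * (ff c'.card * ff c''.card * (∏ c ∈ J, ff c.card) *
          (((c'.card : ℚ) + ∑ i ∈ S, (i.card : ℚ)) ^ ((S.card : ℤ) - 2) *
          ((c''.card : ℚ) + ∑ i ∈ J \ S, (i.card : ℚ)) ^ (((J \ S).card : ℤ) - 2)))) := by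
    intro S hS
    have s1 : c' ∉ S := fun h' => n2 (mem_powerset.1 hS h')
    have s2 : c'' ∉ J \ S := fun h' => n3 (mem_sdiff.1 h').1
    have hD := hJs S hS
    have hE : insert c'' (J \ S) ⊆ CC A τ := by rw [← hcompl S hS]; exact sdiff_subset
    have hYe := sdiff_biUnion hτ hD
    rw [hcompl S hS] at hYe
    simp only [hG]
    rw [hYe]
    have t := cut_term hn (inv_biUnion hD) (inv_biUnion hE)
      ⟨a, mem_biUnion.2 ⟨c', mem_insert_self _ _, cyc_self τ a⟩⟩
      ⟨b, mem_biUnion.2 ⟨c'', mem_insert_self _ _, cyc_self τ b⟩⟩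
    rw [CC_biUnion hD, CC_biUnion hE] at t
    have cs : ((insert c' S).biUnion id).card + ((insert c'' (J \ S)).biUnion id).card
        = A.card := by
      rw [← hYe, add_comm]
      apply card_sdiff_add_card_eq_card
      conv_rhs => rw [← biUnion_CC hτ]
      exact biUnion_subset_biUnion_of_subset_left _ hD
    have ks : (insert c' S).card + (insert c'' (J \ S)).card = (CC A σ).card + 1 := by
      rw [card_insert_of_notMem s1, card_insert_of_notMem s2]
      have := card_sdiff_add_card_eq_card (mem_powerset.1 hS)
      omega
    rw [cs, ks] at t
    refine ⟨fun hh => t.1 (by omega), fun hh => ?_⟩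
    rw [t.2 (by omega), card_CC hD, card_CC hE, sum_insert s1, sum_insert s2, prod_insert s1,
      prod_insert s2, card_insert_of_notMem s1, card_insert_of_notMem s2,
      ← prod_sdiff (mem_powerset.1 hS)]
    push_cast
    rw [show (S.card : ℤ) + 1 - 3 = (S.card : ℤ) - 2 by ring,
      show ((J \ S).card : ℤ) + 1 - 3 = ((J \ S).card : ℤ) - 2 by ring]
    ring
  have hTT : (n + 3 ≤ A.card + (CC A σ).card → TT A σ n a b =
      ∑ S ∈ J.powerset, G ((insert c' S).biUnion id)) := by
    intro hh
    rw [← hsum]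
    unfold TT
    rw [← hτdef, ((hn n le_rfl A τ ⟨a, ha⟩ hτ).1 (by omega)), zero_add]
  refine ⟨fun hh => ?_, fun hh => ?_⟩
  · rw [hTT (by omega)]
    exact sum_eq_zero (fun S hS => (hdata S hS).1 hh)
  · rw [hTT (by omega), sum_congr rfl (fun S hS => (hdata S hS).2 hh),
      show (cyc σ a).card - c'.card = c''.card by omega]
    unfold BB
    rw [mul_sum, mul_sum]

end
end Hurw

namespace Hurw
open Finset
set_option linter.unusedSectionVars false

section
variable {α : Type*} [DecidableEq α] [Fintype α]

lemma NN_rec' (A : Finset α) (σ : Equiv.Perm α) (hA : ∀ x ∈ A, σ x ∈ A) (n : ℕ) :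
    NN A σ (n + 1) = ∑ a ∈ A, (∑ b ∈ (cyc σ a).erase a, TT A σ n a b +
      ∑ b ∈ A \ cyc σ a, TT A σ n a b) := by
  rw [NN_rec]
  change ∑ p ∈ A.offDiag, TT A σ n p.1 p.2 = _
  rw [sum_finset_product' A.offDiag A (fun a => A.erase a) (f := fun a b => TT A σ n a b)]
  · apply sum_congr rfl
    intro a ha
    have hsub := inv_cyc hA ha
    rw [← sum_union]
    · apply sum_congr _ (fun _ _ => rfl)
      ext b
      simp only [mem_union, mem_erase, mem_sdiff]
      constructor
      · rintro ⟨h1, h2⟩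
        by_cases h : b ∈ cyc σ a
        · exact Or.inl ⟨h1, h⟩
        · exact Or.inr ⟨h2, h⟩
      · rintro (⟨h1, h2⟩ | ⟨h1, h2⟩)
        · exact ⟨h1, hsub h2⟩
        · exact ⟨fun h => h2 (h ▸ cyc_self σ a), h1⟩
    · rw [disjoint_left]
      intro x hx hy
      exact (mem_sdiff.1 hy).2 (mem_erase.1 hx).2
  · rintro ⟨x, y⟩
    simp only [mem_offDiag, mem_erase]
    tauto

lemma claim_zero : Claim α 0 := by
  intro A σ hne hA
  have hk : (CC A σ).card ≤ A.card := card_image_le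
  have hk1 : 1 ≤ (CC A σ).card := (hne.image _).card_pos
  constructor
  · intro h
    unfold NN
    simp only [SS]
    rw [if_neg]
    rintro ⟨_, h2⟩
    have : A.card ≤ 1 := card_le_one.2 (fun x hx y hy => h2 x hx y hy)
    omega
  · intro h
    have h1 : A.card = 1 := by omega
    have h2 : (CC A σ).card = 1 := by omega
    obtain ⟨x, rfl⟩ := card_eq_one.1 h1
    have hx : σ x = x := by simpa using hA x (by simp)
    have hC : ∏ c ∈ CC {x} σ, ff c.card = 1 := by
      obtain ⟨c, hc⟩ := card_eq_one.1 h2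
      have := card_CC' hA
      rw [hc] at this ⊢
      rw [sum_singleton, card_singleton] at this
      rw [prod_singleton, ← this]
      simp [ff, cc]
    rw [hC, h1]
    unfold NN
    simp only [SS]
    rw [if_pos]
    · simp
    · refine ⟨?_, ?_⟩
      · intro y hy; rw [mem_singleton] at hy; subst hy; simp [hx]
      · intro y hy z hz
        rw [mem_singleton] at hy hz
        subst hy; subst hz; exact RR_refl _ _

lemma claim_succ (n : ℕ) (hn : ∀ i ≤ n, Claim α i) : Claim α (n + 1) := by
  intro A σ hne hA
  rw [NN_rec' A σ hA]
  have memA : ∀ a ∈ A, ∀ b ∈ (cyc σ a).erase a, b ∈ A ∧ a ≠ b ∧ σ.SameCycle a b := by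
    intro a ha b hb
    rw [mem_erase] at hb
    exact ⟨inv_cyc hA ha hb.2, hb.1.symm, mem_cyc.1 hb.2⟩
  have memB : ∀ a ∈ A, ∀ b ∈ A \ cyc σ a, b ∈ A ∧ a ≠ b ∧ ¬ σ.SameCycle a b := by
    intro a ha b hb
    rw [mem_sdiff, mem_cyc] at hb
    exact ⟨hb.1, fun h => hb.2 (h ▸ Equiv.Perm.SameCycle.refl _ _), hb.2⟩
  constructor
  · intro hh
    apply sum_eq_zero
    intro a ha
    rw [sum_eq_zero, sum_eq_zero, add_zero]
    · intro b hb
      obtain ⟨h1, h2, h3⟩ := memB a ha b hb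
      exact (TT_join (hn n le_rfl) hA ha h1 h2 h3).1 (by omega)
    · intro b hb
      obtain ⟨h1, h2, h3⟩ := memA a ha b hb
      exact (TT_cut hn hA ha h1 h2 h3).1 (by omega)
  · intro hh
    set C := CC A σ with hC
    set m : ℚ := (A.card : ℚ) with hm
    have e1 : ∀ a ∈ A, ∑ b ∈ (cyc σ a).erase a, TT A σ n a b = 2 ^ n * (n.factorial : ℚ) *
        ∑ r ∈ Ico 1 (cyc σ a).card, ff r * ff ((cyc σ a).card - r) *
          (∏ c ∈ C.erase (cyc σ a), ff c.card) *
          BB Finset.card (C.erase (cyc σ a)) r ((cyc σ a).card - r) := by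
      intro a ha
      rw [← cut_count σ a (fun r => ff r * ff ((cyc σ a).card - r) *
          (∏ c ∈ C.erase (cyc σ a), ff c.card) *
          BB Finset.card (C.erase (cyc σ a)) r ((cyc σ a).card - r)), mul_sum]
      apply sum_congr rfl
      intro b hb
      obtain ⟨h1, h2, h3⟩ := memA a ha b hb
      exact (TT_cut hn hA ha h1 h2 h3).2 (by omega)
    have e2 : ∀ a ∈ A, ∑ b ∈ A \ cyc σ a, TT A σ n a b = 2 ^ n * (n.factorial : ℚ) *
        ∑ e ∈ C.erase (cyc σ a), (e.card : ℚ) * (m ^ ((C.card : ℤ) - 4) *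
          (ff ((cyc σ a).card + e.card) * ∏ c ∈ (C.erase (cyc σ a)).erase e, ff c.card)) := by
      intro a ha
      have hs : {cyc σ a} ⊆ CC A σ := by
        rw [singleton_subset_iff]; exact mem_image_of_mem _ ha
      have hd : A \ cyc σ a = (C.erase (cyc σ a)).biUnion id := by
        have := sdiff_biUnion hA hs
        rw [singleton_biUnion, sdiff_singleton_eq_erase] at this
        exact this
      have hE : C.erase (cyc σ a) ⊆ CC A σ := erase_subset _ _
      have := sum_CC (inv_biUnion hE) (fun e => (m ^ ((C.card : ℤ) - 4) *
          (ff ((cyc σ a).card + e.card) * ∏ c ∈ (C.erase (cyc σ a)).erase e, ff c.card)))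
      rw [CC_biUnion hE, ← hd] at this
      rw [← this, mul_sum]
      apply sum_congr rfl
      intro b hb
      obtain ⟨h1, h2, h3⟩ := memB a ha b hb
      exact (TT_join (hn n le_rfl) hA ha h1 h2 h3).2 (by omega)
    rw [sum_congr rfl (fun a ha => by rw [e1 a ha, e2 a ha])]
    rw [sum_CC hA (fun c => 2 ^ n * (n.factorial : ℚ) *
        ∑ r ∈ Ico 1 c.card, ff r * ff (c.card - r) *
          (∏ c' ∈ C.erase c, ff c'.card) *
          BB Finset.card (C.erase c) r (c.card - r) + 2 ^ n * (n.factorial : ℚ) *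
        ∑ e ∈ C.erase c, (e.card : ℚ) * (m ^ ((C.card : ℤ) - 4) *
          (ff (c.card + e.card) * ∏ c' ∈ (C.erase c).erase e, ff c'.card)))]
    have hmC : m = ∑ c ∈ C, (c.card : ℚ) := by
      rw [hm, card_CC' hA]; push_cast; rfl
    have main := main_id C (hne.image _) Finset.card (fun c hc => (CC_nonempty hc).card_pos) m hmC
    have hn1 : m + C.card - 2 = (n : ℚ) + 1 := by
      have : ((n + 1 + 2 : ℕ) : ℚ) = ((A.card + C.card : ℕ) : ℚ) := by rw [hh]
      push_cast at this
      rw [hm]; linarith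
    rw [hn1] at main
    rw [Nat.factorial_succ, pow_succ]
    push_cast
    rw [show (2 : ℚ) ^ n * 2 * (((n : ℚ) + 1) * (n.factorial : ℚ)) * (m ^ ((C.card : ℤ) - 3) *
        ∏ c ∈ C, ff c.card) = 2 ^ n * (n.factorial : ℚ) * (2 * ((n : ℚ) + 1) *
          m ^ ((C.card : ℤ) - 3) * ∏ c ∈ C, ff c.card) by ring, main, ← sum_add_distrib, mul_sum]
    apply sum_congr rfl
    intro c _
    have : ∑ j ∈ C.erase c, (c.card : ℚ) * j.card * (m ^ ((C.card : ℤ) - 4) *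
        (ff (c.card + j.card) * ∏ c' ∈ (C.erase c).erase j, ff c'.card)) =
        (c.card : ℚ) * ∑ j ∈ C.erase c, (j.card : ℚ) * (m ^ ((C.card : ℤ) - 4) *
        (ff (c.card + j.card) * ∏ c' ∈ (C.erase c).erase j, ff c'.card)) := by
      rw [mul_sum]
      apply sum_congr rfl
      intro j _
      ring
    rw [this]
    ring

theorem claim_all (n : ℕ) : Claim α n := by
  induction n using Nat.strong_induction_on with
  | _ n ih =>
    cases n with
    | zero => exact claim_zero
    | succ n => exact claim_succ n (fun i hi => ih i (by omega))

end
end Hurw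

namespace Hurw
open Finset
set_option linter.unusedSectionVars false

section
variable {α : Type*} [DecidableEq α] [Fintype α]

lemma cyc_fixed {σ : Equiv.Perm α} {x : α} (h : σ x = x) : cyc σ x = {x} := by
  ext y
  rw [mem_cyc, sc_lt (n := 1) (by norm_num) (by simpa using h), mem_singleton]
  constructor
  · rintro ⟨j, hj, rfl⟩
    obtain rfl : j = 0 := by omega
    rfl
  · rintro rfl
    exact ⟨0, by norm_num, rfl⟩

lemma cyc_moved {σ : Equiv.Perm α} {x : α} (h : σ x ≠ x) : cyc σ x = (σ.cycleOf x).support := by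
  ext y
  rw [mem_cyc, Equiv.Perm.mem_support_cycleOf_iff' h]

lemma CC_univ (σ : Equiv.Perm α) : CC univ σ =
    (σ.cycleFactorsFinset.image Equiv.Perm.support) ∪ (σ.supportᶜ.image (fun x => {x})) := by
  ext c
  rw [mem_union, mem_image, mem_image]
  constructor
  · intro hc
    obtain ⟨x, _, rfl⟩ := mem_image.1 hc
    by_cases h : σ x = x
    · right
      exact ⟨x, by simpa using h, (cyc_fixed h).symm⟩
    · left
      exact ⟨σ.cycleOf x, Equiv.Perm.cycleOf_mem_cycleFactorsFinset_iff.2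
        (Equiv.Perm.mem_support.2 h), (cyc_moved h).symm⟩
  · rintro (⟨f, hf, rfl⟩ | ⟨x, hx, rfl⟩)
    · have hcyc := (Equiv.Perm.mem_cycleFactorsFinset_iff.1 hf).1
      obtain ⟨x, hx⟩ : f.support.Nonempty := by
        rw [nonempty_iff_ne_empty, Ne, Equiv.Perm.support_eq_empty_iff]
        exact hcyc.ne_one
      have hfx : f = σ.cycleOf x := Equiv.Perm.cycle_is_cycleOf hx hf
      refine mem_image.2 ⟨x, mem_univ _, ?_⟩
      rw [hfx]
      apply cyc_moved
      exact Equiv.Perm.mem_support.1 (Equiv.Perm.mem_cycleFactorsFinset_support_le hf hx)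
    · rw [mem_compl, Equiv.Perm.notMem_support] at hx
      exact mem_image.2 ⟨x, mem_univ _, cyc_fixed hx⟩

lemma CC_parts (σ : Equiv.Perm α) : (CC univ σ).val.map Finset.card = σ.partition.parts := by
  have hd : Disjoint (σ.cycleFactorsFinset.image Equiv.Perm.support)
      (σ.supportᶜ.image (fun x => ({x} : Finset α))) := by
    rw [disjoint_left]
    intro c h1 h2
    obtain ⟨f, hf, rfl⟩ := mem_image.1 h1
    obtain ⟨x, hx, h3⟩ := mem_image.1 h2
    have hcyc := (Equiv.Perm.mem_cycleFactorsFinset_iff.1 hf).1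
    have := hcyc.two_le_card_support
    rw [← h3] at this
    simp at this
  have hinj : Set.InjOn Equiv.Perm.support (σ.cycleFactorsFinset : Set (Equiv.Perm α)) := by
    intro f hf g hg hfg
    have hcyc := (Equiv.Perm.mem_cycleFactorsFinset_iff.1 hf).1
    obtain ⟨x, hx⟩ : f.support.Nonempty := by
      rw [nonempty_iff_ne_empty, Ne, Equiv.Perm.support_eq_empty_iff]
      exact hcyc.ne_one
    have h1 : f = σ.cycleOf x := Equiv.Perm.cycle_is_cycleOf hx hf
    have h2 : g = σ.cycleOf x := Equiv.Perm.cycle_is_cycleOf (hfg ▸ hx) hg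
    rw [h1, h2]
  rw [CC_univ, ← disjUnion_eq_union _ _ hd, disjUnion_val, Multiset.map_add,
    image_val_of_injOn hinj, image_val_of_injOn (fun x _ y _ h => singleton_injective h),
    Equiv.Perm.parts_partition, Equiv.Perm.cycleType_def, Multiset.map_map, Multiset.map_map]
  congr 1
  simp [card_compl]

lemma centralizer_card (σ : Equiv.Perm α) :
    Nat.card (Subgroup.centralizer {σ}) = σ.partition.parts.prod *
      ∏ n ∈ σ.partition.parts.toFinset, (σ.partition.parts.count n).factorial := by
  rw [Equiv.Perm.nat_card_centralizer, Equiv.Perm.parts_partition, Equiv.Perm.sum_cycleType]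
  set r := Fintype.card α - σ.support.card with hr
  set ct := σ.cycleType with hct
  have h1 : (1 : ℕ) ∉ ct := fun h => by
    have := Equiv.Perm.two_le_of_mem_cycleType h
    omega
  have hsub : (ct + Multiset.replicate r 1).toFinset ⊆ insert 1 ct.toFinset := by
    intro n hn
    rw [Multiset.mem_toFinset, Multiset.mem_add] at hn
    rw [mem_insert, Multiset.mem_toFinset]
    rcases hn with h | h
    · exact Or.inr h
    · exact Or.inl (Multiset.eq_of_mem_replicate h)
  have e0 : ∏ n ∈ (ct + Multiset.replicate r 1).toFinset,
      ((ct + Multiset.replicate r 1).count n).factorial = ∏ n ∈ insert 1 ct.toFinset,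
      ((ct + Multiset.replicate r 1).count n).factorial := by
    apply prod_subset hsub
    intro n _ hn
    rw [Multiset.mem_toFinset] at hn
    rw [Multiset.count_eq_zero_of_notMem hn]
    rfl
  rw [e0]
  · rw [prod_insert (by simpa using h1), Multiset.prod_add, Multiset.prod_replicate, one_pow,
      mul_one]
    have e1 : (ct + Multiset.replicate r 1).count 1 = r := by
      rw [Multiset.count_add, Multiset.count_eq_zero_of_notMem h1, Multiset.count_replicate_self,
        zero_add]
    have e2 : ∏ n ∈ ct.toFinset, ((ct + Multiset.replicate r 1).count n).factorial =
        ∏ n ∈ ct.toFinset, (ct.count n).factorial := by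
      apply prod_congr rfl
      intro n hn
      rw [Multiset.mem_toFinset] at hn
      have : n ≠ 1 := fun h => h1 (h ▸ hn)
      rw [Multiset.count_add, Multiset.count_replicate, if_neg this.symm, add_zero]
    rw [e1, e2]
    ring

lemma symm_card (k : ℕ) (part : Fin k → ℕ) :
    Nat.card {π : Equiv.Perm (Fin k) // ∀ i, part (π i) = part i} =
      ∏ n ∈ (Multiset.map part univ.val).toFinset,
        ((Multiset.map part univ.val).count n).factorial := by
  have e : Nat.card {π : Equiv.Perm (Fin k) // ∀ i, part (π i) = part i} =
      Nat.card {g : Equiv.Perm (Fin k) // part ∘ g = part} := by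
    apply Nat.card_congr
    apply Equiv.subtypeEquivRight
    intro π
    exact funext_iff.symm
  rw [e, Nat.card_eq_fintype_card, DomMulAct.stabilizer_card']
  apply prod_congr rfl
  intro n _
  congr 1
  rw [Multiset.count_map, Fintype.card_subtype]
  change _ = (univ.filter (fun a => n = part a)).card
  congr 1
  ext i
  simp [eq_comm]

end
end Hurw

namespace Hurw
open Finset
set_option linter.unusedSectionVars false

section
variable {α : Type*} [DecidableEq α] [Fintype α]

open Classical in
/-- The set of transpositions. -/
noncomputable def SW (α : Type*) [DecidableEq α] [Fintype α] : Finset (Equiv.Perm α) :=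
  univ.filter (fun τ => τ.IsSwap)

lemma mem_SW {τ : Equiv.Perm α} : τ ∈ SW α ↔ τ.IsSwap := by simp [SW]

lemma sum_swaps (g : Equiv.Perm α → ℚ) :
    ∑ p ∈ (univ : Finset α).offDiag, g (Equiv.swap p.1 p.2) =
      2 * ∑ τ ∈ SW α, g τ := by
  rw [← sum_fiberwise_of_maps_to (s := (univ : Finset α).offDiag)
    (t := SW α) (g := fun p => Equiv.swap p.1 p.2)]
  · rw [mul_sum]
    apply sum_congr rfl
    intro τ hτ
    obtain ⟨x, y, hxy, rfl⟩ := mem_SW.1 hτ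
    rw [sum_congr rfl (g := fun _ => g (Equiv.swap x y))
      (fun p hp => by rw [(mem_filter.1 hp).2])]
    rw [sum_const, nsmul_eq_mul]
    congr 1
    have : ((univ : Finset α).offDiag.filter (fun p => Equiv.swap p.1 p.2 = Equiv.swap x y)) =
        {(x, y), (y, x)} := by
      ext ⟨a, b⟩
      simp only [mem_filter, mem_offDiag, mem_univ, true_and, mem_insert, mem_singleton,
        Prod.mk.injEq]
      constructor
      · rintro ⟨hab, h⟩
        have h1 := congrArg (fun f => f a) h
        simp only [Equiv.swap_apply_left] at h1
        rw [Equiv.swap_apply_def] at h1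
        split_ifs at h1 with h2 h3
        · exact Or.inl ⟨h2, h1⟩
        · exact Or.inr ⟨h3, h1⟩
        · exact absurd h1.symm hab
      · rintro (⟨rfl, rfl⟩ | ⟨rfl, rfl⟩)
        · exact ⟨hxy, rfl⟩
        · exact ⟨hxy.symm, Equiv.swap_comm _ _⟩
    rw [this, card_pair]
    · norm_num
    · intro h
      exact hxy (congrArg Prod.fst h)
  · rintro p hp
    rw [mem_offDiag] at hp
    exact mem_SW.2 ⟨p.1, p.2, hp.2.2, rfl⟩

lemma SS_swaps (n : ℕ) : ∀ U : List (Equiv.Perm α) → ℚ,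
    SS (univ : Finset α).offDiag n (fun L => U (L.map (fun p => Equiv.swap p.1 p.2))) =
      2 ^ n * SS (SW α) n U := by
  induction n with
  | zero => intro U; simp [SS]
  | succ n ih =>
    intro U
    simp only [SS, List.map_cons]
    rw [sum_congr rfl (fun p _ => ih (fun l => U (Equiv.swap p.1 p.2 :: l))), ← mul_sum,
      sum_swaps (fun τ => SS (SW α) n
        (fun l => U (τ :: l)))]
    ring

lemma SS_fn {γ : Type*} [DecidableEq γ] [Fintype γ] (Z : Finset γ) (n : ℕ) :
    ∀ U : List γ → ℚ, SS Z n U =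
      ∑ τ : Fin n → γ, if ∀ i, τ i ∈ Z then U (List.ofFn τ) else 0 := by
  induction n with
  | zero => intro U; simp [SS]
  | succ n ih =>
    intro U
    simp only [SS]
    rw [← (Fin.consEquiv (fun _ : Fin (n + 1) => γ)).sum_comp, Fintype.sum_prod_type]
    rw [← sum_subset (subset_univ Z)]
    · apply sum_congr rfl
      intro x hx
      rw [ih]
      apply sum_congr rfl
      intro τ _
      simp only [Fin.consEquiv_apply, Fin.forall_fin_succ, Fin.cons_zero, Fin.cons_succ, hx,
        true_and, List.ofFn_succ]
    · intro x _ hx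
      apply sum_eq_zero
      intro τ _
      rw [if_neg]
      intro h
      exact hx (by simpa [Fin.consEquiv_apply] using h 0)

lemma good_iff (σ : Equiv.Perm α) (L : List (α × α)) :
    good univ σ L ↔ ((L.map (fun p => Equiv.swap p.1 p.2)).prod = σ ∧
      ∀ x y : α, ∃ g ∈ Subgroup.closure ({t | t ∈ L.map (fun p => Equiv.swap p.1 p.2)} ∪ {σ}),
        g x = y) := by
  have h1 : (∀ x ∈ (univ : Finset α), Pr L x = σ x) ↔
      (L.map (fun p => Equiv.swap p.1 p.2)).prod = σ := by
    constructor
    · intro h; ext x; exact h x (mem_univ x)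
    · intro h x _; rw [← h]; rfl
  unfold good
  rw [h1]
  apply and_congr_right
  intro hσ
  constructor
  · intro hC x y
    set H := Subgroup.closure ({t | t ∈ L.map (fun p => Equiv.swap p.1 p.2)} ∪ {σ}) with hH
    refine RR_min (fun x y => ∃ g ∈ H, g x = y) ⟨?_, ?_, ?_⟩ L ?_ x y
      (hC x (mem_univ x) y (mem_univ y))
    · intro x; exact ⟨1, H.one_mem, rfl⟩
    · rintro x y ⟨g, hg, rfl⟩; exact ⟨g⁻¹, H.inv_mem hg, by simp⟩
    · rintro x y z ⟨g, hg, rfl⟩ ⟨g', hg', rfl⟩; exact ⟨g' * g, H.mul_mem hg' hg, rfl⟩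
    · intro p hp
      refine ⟨Equiv.swap p.1 p.2, Subgroup.subset_closure (Or.inl ?_), Equiv.swap_apply_left _ _⟩
      exact List.mem_map.2 ⟨p, hp, rfl⟩
  · intro h x _ y _
    obtain ⟨g, hg, hgx⟩ := h x y
    rw [← hgx]
    have key : ∀ g ∈ Subgroup.closure ({t | t ∈ L.map (fun p => Equiv.swap p.1 p.2)} ∪ {σ}),
        ∀ x, RR L x (g x) := by
      clear * - hσ
      intro g hg
      induction hg using Subgroup.closure_induction with
      | mem g hg =>
        rcases hg with hg | hg
        · obtain ⟨p, hp, rfl⟩ := List.mem_map.1 hg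
          intro x
          rw [Equiv.swap_apply_def]
          split_ifs with h1 h2
          · rw [h1]; exact RR_mem L p hp
          · rw [h2]; exact RR_symm L (RR_mem L p hp)
          · exact RR_refl L x
        · rw [Set.mem_singleton_iff] at hg
          subst hg
          intro x
          rw [← hσ]
          exact RR_Pr L x
      | one => intro x; exact RR_refl L x
      | mul f g _ _ hf hg => intro x; exact RR_trans L (hg x) (hf (g x))
      | inv f _ hf =>
        intro x
        have := hf (f⁻¹ x)
        rw [← Equiv.Perm.mul_apply, mul_inv_cancel, Equiv.Perm.one_apply] at this
        exact RR_symm L this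
    exact key g hg x

open Classical in
lemma NN_card (σ : Equiv.Perm α) (n : ℕ) : NN univ σ n = 2 ^ n *
    (Nat.card {τ : Fin n → Equiv.Perm α // (∀ i, (τ i).IsSwap) ∧ (List.ofFn τ).prod = σ ∧
        ∀ x y : α, ∃ g ∈ Subgroup.closure (Set.range τ ∪ {σ}), g x = y} : ℚ) := by
  unfold NN
  rw [SS_congr _ n _ (fun L => (fun l : List (Equiv.Perm α) => if (l.prod = σ ∧
      ∀ x y : α, ∃ g ∈ Subgroup.closure ({t | t ∈ l} ∪ {σ}), g x = y) then (1 : ℚ) else 0)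
      (L.map (fun p => Equiv.swap p.1 p.2)))]
  · rw [SS_swaps n (fun l : List (Equiv.Perm α) => if (l.prod = σ ∧
      ∀ x y : α, ∃ g ∈ Subgroup.closure ({t | t ∈ l} ∪ {σ}), g x = y) then (1 : ℚ) else 0), SS_fn]
    congr 1
    rw [Nat.card_eq_fintype_card, Fintype.card_subtype, card_filter]
    push_cast
    apply sum_congr rfl
    intro τ _
    rw [← ite_and]
    apply if_congr _ rfl rfl
    have : {t | t ∈ List.ofFn τ} = Set.range τ := by
      ext t; simp [List.mem_ofFn]
    rw [this]
    simp only [mem_SW]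
  · intro L _ _
    exact if_congr (good_iff σ L) rfl rfl

end
end Hurw


/-- Classical Hurwitz formula.  Fix a permutation `σ ∈ S_m` of cycle type
`(m₁,…,m_k)` (a partition of `m ≥ 3` into `k` parts).  The number of `(m+k-2)`-tuples of
transpositions whose product is `σ` and which, together with `σ`, generate a transitive
subgroup, divided by the number of relabelings (elements of the centralizer of `σ`, whose
order is `m₁⋯m_k·s(m₁,…,m_k)`), equals
`m^{k-3}·(m+k-2)!·m₁^{m₁}⋯m_k^{m_k}/(m₁!⋯m_k!·s(m₁,…,m_k))`, where `s` is the number of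
symmetries of the multiset `{m₁,…,m_k}`. -/
theorem stmt_9 (m k : ℕ) (hm : 3 ≤ m) (hk : 1 ≤ k)
    (part : Fin k → ℕ) (hpart : ∀ i, 1 ≤ part i) (hsum : ∑ i, part i = m)
    (σ : Equiv.Perm (Fin m))
    (hσ : (Equiv.Perm.partition σ).parts = Multiset.map part Finset.univ.val)
    (s : ℕ) (hs : s = Nat.card {π : Equiv.Perm (Fin k) // ∀ i, part (π i) = part i}) :
    ((Nat.card {τ : Fin (m + k - 2) → Equiv.Perm (Fin m) //
        (∀ i, (τ i).IsSwap) ∧ (List.ofFn τ).prod = σ ∧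
        ∀ x y : Fin m, ∃ g ∈ Subgroup.closure (Set.range τ ∪ {σ}), g x = y} : ℚ)) /
        (Nat.card (Subgroup.centralizer {σ}) : ℚ)
      = (m : ℚ) ^ ((k : ℤ) - 3) * ((m + k - 2).factorial : ℚ) *
          (∏ i, (part i : ℚ) ^ (part i)) /
          ((∏ i, ((part i).factorial : ℚ)) * (s : ℚ)) := by
  have hp : (Hurw.CC Finset.univ σ).val.map Finset.card = Multiset.map part Finset.univ.val := by
    rw [Hurw.CC_parts, hσ]
  have hk2 : (Hurw.CC Finset.univ σ).card = k := by
    have := congrArg Multiset.card hp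
    simpa using this
  have hprod : ∏ c ∈ Hurw.CC Finset.univ σ, Hurw.ff c.card = ∏ i, Hurw.ff (part i) := by
    have := congrArg (fun t => (Multiset.map Hurw.ff t).prod) hp
    simp only [Multiset.map_map] at this
    exact this
  have hne : (Finset.univ : Finset (Fin m)).Nonempty := ⟨⟨0, by omega⟩, Finset.mem_univ _⟩
  have hcl := (Hurw.claim_all (α := Fin m) (m + k - 2) Finset.univ σ hne
    (fun x _ => Finset.mem_univ _)).2 (by rw [hk2, Finset.card_univ, Fintype.card_fin]; omega)
  rw [Hurw.NN_card, hk2, hprod, Finset.card_univ, Fintype.card_fin, mul_assoc] at hcl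
  have hN := mul_left_cancel₀ (pow_ne_zero _ (two_ne_zero)) hcl
  rw [hN, Hurw.centralizer_card, hσ, ← Hurw.symm_card, ← hs]
  have hpp : (Multiset.map part Finset.univ.val).prod = ∏ i, part i := rfl
  rw [hpp]
  have hs0 : (s : ℚ) ≠ 0 := by
    have : s ≠ 0 := by
      rw [hs, Hurw.symm_card]
      exact Finset.prod_ne_zero_iff.2 (fun n _ => Nat.factorial_ne_zero _)
    exact_mod_cast this
  have hP0 : (∏ i, (part i : ℚ)) ≠ 0 := by
    apply Finset.prod_ne_zero_iff.2
    intro i _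
    have := hpart i
    have : part i ≠ 0 := by omega
    exact_mod_cast this
  have hF0 : (∏ i, ((part i).factorial : ℚ)) ≠ 0 := by
    apply Finset.prod_ne_zero_iff.2
    intro i _
    exact_mod_cast Nat.factorial_ne_zero _
  have hff : ∏ i, Hurw.ff (part i) = (∏ i, (part i : ℚ)) * ((∏ i, (part i : ℚ) ^ (part i)) /
      (∏ i, ((part i).factorial : ℚ))) := by
    rw [← Finset.prod_div_distrib, ← Finset.prod_mul_distrib]
    rfl
  rw [hff]
  push_cast
  field_simp
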